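/- arXiv:1810.08022 — 3 statements merged into one kernel-verified Lean document; each statement's English description precedes it below -/
import Mathlib

section
/- There exists a sequence of polynomials F_m(x,q) ∈ ℚ[x,q] (m ≥ 0) with F_0 = 1 such that for every positive integer n the following identities hold in ℚ[x][q,q⁻¹]: d_{2n,0}(x,q) = (−1)^n · q^{c(2n,0)} · p_{2n,0}(x) · F_n(x+1,q)², and d_{n,1}(x,q) = q^{c(n,1)} · p_{n,1}(x) · F_{⌊(n+1)/2⌋}(x,q) · F_{⌊n/2⌋}(x+2,q). -/
open Polynomial LaurentPolynomial Finset

noncomputable section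

/-- The ring ℚ[x][q,q⁻¹]: Laurent polynomials in `q` over ℚ[x]. -/
abbrev RQ : Type := LaurentPolynomial (Polynomial ℚ)

/-- The polynomial binomial coefficient binom(y, m) = y(y-1)⋯(y-m+1)/m!. -/
noncomputable def binomQ (y : Polynomial ℚ) (m : ℕ) : Polynomial ℚ :=
  Polynomial.C ((m.factorial : ℚ))⁻¹ * ∏ t ∈ Finset.range m, (y - (t : Polynomial ℚ))

/-- a_m(q) ∈ ℚ[x][q,q⁻¹]: a_m = ∑_{l=0}^{m-1}(-q)^l for m > 0, a_0 = 0,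
a_m = -∑_{l=1}^{-m}(-q)^{-l} for m < 0.  Here q = T 1. -/
noncomputable def aQ (m : ℤ) : RQ :=
  if 0 < m then ∑ l ∈ Finset.range m.toNat, (-1 : RQ) ^ l * LaurentPolynomial.T (l : ℤ)
  else -∑ l ∈ Finset.range (-m).toNat, (-1 : RQ) ^ (l + 1) * LaurentPolynomial.T (-(l + 1 : ℤ))

/-- The matrix D_{n,k}(x+c, q) (1-based (i,j) entry binom(x+c+i+j-2, j-1)·a_{j-i+k}(q)). -/
noncomputable def Dmat (n : ℕ) (k c : ℤ) : Matrix (Fin n) (Fin n) RQ :=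
  Matrix.of fun i j =>
    LaurentPolynomial.C
      (binomQ (Polynomial.X + Polynomial.C (c : ℚ) + ((i : ℕ) : Polynomial ℚ)
        + ((j : ℕ) : Polynomial ℚ)) (j : ℕ)) *
    aQ ((j : ℤ) - (i : ℤ) + k)

/-- d_{n,k}(x+c, q) := det D_{n,k}(x+c, q). -/
noncomputable def dd (n : ℕ) (k c : ℤ) : RQ := (Dmat n k c).det

/-- The exponent c(n,k): 0 if k > 0 and n ≤ k; nk if k < 0 and n ≤ -k;
-∑_{i=1}^{n-k}⌊i/2⌋ otherwise. -/
def cExp (n : ℕ) (k : ℤ) : ℤ :=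
  if 0 < k ∧ (n : ℤ) ≤ k then 0
  else if k < 0 ∧ (n : ℤ) ≤ -k then (n : ℤ) * k
  else -((∑ i ∈ Finset.range ((n : ℤ) - k).toNat, ((i + 1) / 2) : ℕ) : ℤ)

/-- p_{n,k}(x) = ∏_{i=1}^{n-1}(⌊i/2⌋!/i!) · ∏_{i=0}^{⌊(n-|k|-1)/2⌋}(x+|k|+2i+1),
the second product (with ⌊(n-|k|+1)/2⌋ factors) being empty if n-|k|-1 < 0. -/
noncomputable def pPoly (n : ℕ) (k : ℤ) : Polynomial ℚ :=
  Polynomial.C (∏ i ∈ Finset.range (n - 1),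
      (((i + 1) / 2).factorial : ℚ) / ((i + 1).factorial : ℚ)) *
  ∏ i ∈ Finset.range ((n - k.natAbs + 1) / 2),
    (Polynomial.X + Polynomial.C ((k.natAbs : ℚ) + 2 * i + 1))

/-- Substituting x ↦ x + c in a bivariate polynomial f(x,q) ∈ (ℚ[x])[q]. -/
noncomputable def shiftX (c : ℚ) (f : Polynomial (Polynomial ℚ)) : Polynomial (Polynomial ℚ) :=
  f.map (Polynomial.aeval (Polynomial.X + Polynomial.C c)).toRingHom

/-- Jacobi's complementary minor formula for the leading block of the adjugate. -/
theorem Matrix.det_mul_det_adjugate_toBlocks₁₁ {R m n : Type*} [CommRing R] [Fintype m]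
    [DecidableEq m] [Fintype n] [DecidableEq n] (M : Matrix (m ⊕ n) (m ⊕ n) R) :
    M.det * M.adjugate.toBlocks₁₁.det = M.det ^ Fintype.card m * M.toBlocks₂₂.det := by
  have h : M * Matrix.fromBlocks M.adjugate.toBlocks₁₁ 0 M.adjugate.toBlocks₂₁ 1
      = Matrix.fromBlocks (M.det • 1) M.toBlocks₁₂ 0 M.toBlocks₂₂ := by
    have h1 := M.mul_adjugate
    rw [← Matrix.fromBlocks_toBlocks M.adjugate] at h1
    nth_rewrite 1 [← Matrix.fromBlocks_toBlocks M] at h1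
    rw [Matrix.fromBlocks_multiply, ← Matrix.fromBlocks_one, Matrix.fromBlocks_smul,
      Matrix.fromBlocks_inj] at h1
    nth_rewrite 1 [← Matrix.fromBlocks_toBlocks M]
    rw [Matrix.fromBlocks_multiply, h1.1, h1.2.2.1]
    simp
  have h2 := congrArg Matrix.det h
  rw [Matrix.det_mul, Matrix.det_fromBlocks_zero₁₂, Matrix.det_fromBlocks_zero₂₁,
    Matrix.det_smul] at h2
  simpa using h2

/-- The equivalence listing the first and the last index of `Fin (n + 2)` before the others. -/
def endsEquiv (n : ℕ) : Fin 2 ⊕ Fin n ≃ Fin (n + 2) :=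
  Equiv.ofBijective (Sum.elim ![0, Fin.last (n + 1)] fun i => i.succ.castSucc) <| by
    rw [Fintype.bijective_iff_injective_and_card]
    constructor
    · rintro (i | i) (j | j) h
      · fin_cases i <;> fin_cases j <;> simp_all [Fin.ext_iff]
      · fin_cases i <;> simp [Fin.ext_iff] at h
        have := j.2; omega
      · fin_cases j <;> simp [Fin.ext_iff] at h
        have := i.2; omega
      · simpa [Fin.ext_iff] using h
    · simp [add_comm]

/-- The Desnanot–Jacobi identity when the determinant can be cancelled. -/
theorem Matrix.det_mul_det_interior_of_ne_zero {R : Type*} [CommRing R] [IsDomain R] (n : ℕ)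
    (M : Matrix (Fin (n + 2)) (Fin (n + 2)) R) (hM : M.det ≠ 0) :
    M.det * (M.submatrix (fun i : Fin n => i.succ.castSucc) fun i => i.succ.castSucc).det
      = (M.submatrix Fin.castSucc Fin.castSucc).det * (M.submatrix Fin.succ Fin.succ).det
        - (M.submatrix Fin.succ Fin.castSucc).det * (M.submatrix Fin.castSucc Fin.succ).det := by
  have h := Matrix.det_mul_det_adjugate_toBlocks₁₁ (M.submatrix (endsEquiv n) (endsEquiv n))
  rw [Matrix.det_submatrix_equiv_self, Matrix.adjugate_submatrix_equiv_self, Fintype.card_fin,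
    Matrix.det_fin_two, pow_two, mul_assoc] at h
  have h := mul_left_cancel₀ hM h
  have hinterior : (M.submatrix (endsEquiv n) (endsEquiv n)).toBlocks₂₂
      = M.submatrix (fun i : Fin n => i.succ.castSucc) fun i => i.succ.castSucc := by
    ext i j; simp [endsEquiv, Matrix.toBlocks₂₂]
  rw [hinterior] at h
  rw [← h]
  have e0 : endsEquiv n (Sum.inl 0) = 0 := rfl
  have e1 : endsEquiv n (Sum.inl 1) = Fin.last (n + 1) := rfl
  simp only [Matrix.toBlocks₁₁, Matrix.of_apply, Matrix.submatrix_apply, e0, e1,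
    Matrix.adjugate_fin_succ_eq_det_submatrix, Fin.succAbove_zero, Fin.succAbove_last,
    Fin.val_zero, Fin.val_last]
  have hs : ((-1 : R) ^ (n + 1)) * (-1) ^ (n + 1) = 1 := by rw [← mul_pow]; simp
  have hs2 : ((-1 : R) ^ (n + 1 + (n + 1))) = 1 := by rw [pow_add, hs]
  simp only [add_zero, zero_add, pow_zero, one_mul, hs2]
  linear_combination (-(M.submatrix Fin.succ Fin.castSucc).det *
    (M.submatrix Fin.castSucc Fin.succ).det) * hs

/-- The Desnanot–Jacobi identity (Dodgson condensation). -/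
theorem Matrix.det_mul_det_interior {R : Type*} [CommRing R] (n : ℕ)
    (M : Matrix (Fin (n + 2)) (Fin (n + 2)) R) :
    M.det * (M.submatrix (fun i : Fin n => i.succ.castSucc) fun i => i.succ.castSucc).det
      = (M.submatrix Fin.castSucc Fin.castSucc).det * (M.submatrix Fin.succ Fin.succ).det
        - (M.submatrix Fin.succ Fin.castSucc).det * (M.submatrix Fin.castSucc Fin.succ).det := by
  have h := Matrix.det_mul_det_interior_of_ne_zero n
    (Matrix.mvPolynomialX (Fin (n + 2)) (Fin (n + 2)) ℤ) (Matrix.det_mvPolynomialX_ne_zero _ ℤ)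
  have h2 := congrArg (MvPolynomial.eval₂Hom (Int.castRingHom R) fun p => M p.1 p.2) h
  simp only [map_mul, map_sub, RingHom.map_det, RingHom.mapMatrix_apply] at h2
  have hM : (Matrix.mvPolynomialX (Fin (n + 2)) (Fin (n + 2)) ℤ).map
      (MvPolynomial.eval₂Hom (Int.castRingHom R) fun p => M p.1 p.2) = M := by
    ext i j; simp
  simpa only [← Matrix.submatrix_map, hM] using h2

/-- The binomial factor of the entries of `Dmat`, at zero-based indices `i`, `j`. -/
def binomEntry (c : ℤ) (i j : ℕ) : Polynomial ℚ :=
  binomQ (Polynomial.X + Polynomial.C (c : ℚ) + (i : Polynomial ℚ) + (j : Polynomial ℚ)) j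

theorem binomEntry_succ_left (c : ℤ) (i j : ℕ) :
    binomEntry c (i + 1) j = binomEntry (c + 1) i j := by
  unfold binomEntry
  congr 1
  push_cast
  simp only [map_add, map_one]
  ring

theorem binomEntry_succ_right (c : ℤ) (i j : ℕ) :
    binomEntry c i (j + 1) = Polynomial.C ((j + 1 : ℚ)⁻¹) *
      (Polynomial.X + Polynomial.C (c + i + 1 : ℚ)) * binomEntry (c + 1) i j := by
  unfold binomEntry binomQ
  have h : ∏ t ∈ Finset.range j, (Polynomial.X + Polynomial.C (c : ℚ) + (i : Polynomial ℚ) +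
        ((j + 1 : ℕ) : Polynomial ℚ) - (t : Polynomial ℚ))
      = ∏ t ∈ Finset.range j, (Polynomial.X + Polynomial.C ((c + 1 : ℤ) : ℚ) + (i : Polynomial ℚ) +
        (j : Polynomial ℚ) - (t : Polynomial ℚ)) := by
    refine Finset.prod_congr rfl fun t _ => ?_
    push_cast
    simp only [map_add, map_one]
    ring
  rw [Finset.prod_range_succ, h, Nat.factorial_succ]
  push_cast
  rw [mul_inv, map_mul]
  simp only [map_add, map_one, map_natCast, map_intCast]
  ring

theorem binomEntry_eq_prod (c : ℤ) (i j : ℕ) :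
    binomEntry c i j = Polynomial.C ((j.factorial : ℚ))⁻¹ *
      ∏ t ∈ Finset.range j, (Polynomial.X + Polynomial.C (c : ℚ) + 1 + ((i + t : ℕ) : ℚ[X])) := by
  unfold binomEntry binomQ
  rw [← Finset.prod_range_reflect]
  congr 1
  refine Finset.prod_congr rfl fun t ht => ?_
  have ht := Finset.mem_range.mp ht
  have h1 : j - 1 - t = j - (t + 1) := by omega
  rw [h1, Nat.cast_sub (by omega)]
  push_cast
  ring

theorem binomEntry_zero_mul_comm (c : ℤ) (i j : ℕ) :
    binomEntry c 0 i * binomEntry c i j = binomEntry c 0 j * binomEntry c j i := by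
  have h (a b : ℕ) : binomEntry c 0 a * binomEntry c a b =
      Polynomial.C ((a.factorial : ℚ))⁻¹ * Polynomial.C ((b.factorial : ℚ))⁻¹ *
      ∏ t ∈ Finset.range (a + b), (Polynomial.X + Polynomial.C (c : ℚ) + 1 + (t : ℚ[X])) := by
    rw [binomEntry_eq_prod, binomEntry_eq_prod, Finset.prod_range_add]
    simp only [zero_add]
    ring
  rw [h, h, add_comm]
  ring

theorem LaurentPolynomial.C_ne_zero_of_ne_zero {R : Type*} [Semiring R] {r : R} (hr : r ≠ 0) :
    LaurentPolynomial.C r ≠ 0 := by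
  rw [← Polynomial.toLaurent_C, Polynomial.toLaurent_ne_zero]
  exact Polynomial.C_ne_zero.mpr hr

theorem binomEntry_zero_ne_zero (c : ℤ) (i : ℕ) : binomEntry c 0 i ≠ 0 := by
  rw [binomEntry_eq_prod]
  refine mul_ne_zero ?_ (Finset.prod_ne_zero_iff.mpr fun t _ => ?_)
  · simp [Nat.factorial_ne_zero]
  · have := Polynomial.X_add_C_ne_zero (c + 1 + t : ℚ)
    simpa [add_assoc] using this

theorem Dmat_apply (n : ℕ) (k c : ℤ) (i j : Fin n) :
    Dmat n k c i j = LaurentPolynomial.C (binomEntry c i j) * aQ ((j : ℤ) - (i : ℤ) + k) := rfl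

/-- The condensation recurrence for `dd`. -/
theorem dd_condensation (n : ℕ) (k c : ℤ) :
    (n + 1 : RQ) * (dd (n + 2) k c * dd n k (c + 2))
      = LaurentPolynomial.C (Polynomial.X + Polynomial.C (c + n + 2 : ℚ)) *
          (dd (n + 1) k c * dd (n + 1) k (c + 2))
        - LaurentPolynomial.C (Polynomial.X + Polynomial.C (c + 1 : ℚ)) *
          (dd (n + 1) (k - 1) (c + 1) * dd (n + 1) (k + 1) (c + 1)) := by
  let f : ℕ → ℚ[X] := fun i => Polynomial.C ((i + 1 : ℚ)⁻¹)
  let g : ℤ → ℕ → ℚ[X] := fun c i => Polynomial.X + Polynomial.C (c + i + 1 : ℚ)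
  have hscale (m : ℕ) (k' c c' : ℤ) (M : Matrix (Fin m) (Fin m) RQ)
      (h : ∀ i j : Fin m, M i j = LaurentPolynomial.C (f j) * (LaurentPolynomial.C (g c' i) *
        Dmat m k' c i j)) :
      M.det = (∏ i ∈ Finset.range m, LaurentPolynomial.C (f i)) *
        ((∏ i ∈ Finset.range m, LaurentPolynomial.C (g c' i)) * dd m k' c) := by
    have e : M = Matrix.of fun (i j : Fin m) => LaurentPolynomial.C (f j) * (Matrix.of fun (i j : Fin m) =>
        LaurentPolynomial.C (g c' i) * Dmat m k' c i j) i j := by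
      ext i j; rw [h]; rfl
    rw [e, Matrix.det_mul_row (fun j : Fin m => LaurentPolynomial.C (f j)),
      Matrix.det_mul_column (fun i : Fin m => LaurentPolynomial.C (g c' i)), Finset.prod_range,
      Finset.prod_range]
    rfl
  have key := Matrix.det_mul_det_interior n (Dmat (n + 2) k c)
  have h00 : (Dmat (n + 2) k c).submatrix Fin.castSucc Fin.castSucc = Dmat (n + 1) k c := by
    ext i j; simp [Dmat_apply]
  have h10 : (Dmat (n + 2) k c).submatrix Fin.succ Fin.castSucc
      = Dmat (n + 1) (k - 1) (c + 1) := by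
    ext1 i j
    simp only [Matrix.submatrix_apply, Dmat_apply, Fin.val_succ, Fin.val_castSucc,
      binomEntry_succ_left]
    congr 2
    push_cast
    ring
  have h11 : ((Dmat (n + 2) k c).submatrix Fin.succ Fin.succ).det = _ :=
    hscale (n + 1) k (c + 2) (c + 1) _ <| by
    intro i j
    simp only [Matrix.submatrix_apply, Dmat_apply, Fin.val_succ, binomEntry_succ_left,
      binomEntry_succ_right, f, g, map_mul]
    have e : ((j + 1 : ℕ) : ℤ) - ((i + 1 : ℕ) : ℤ) + k = (j : ℤ) - (i : ℤ) + k := by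
      push_cast; ring
    rw [e, show c + 1 + 1 = c + 2 by ring]
    ring
  have hin : ((Dmat (n + 2) k c).submatrix (fun i : Fin n => i.succ.castSucc)
      fun i => i.succ.castSucc).det = _ := hscale n k (c + 2) (c + 1) _ <| by
    intro i j
    simp only [Matrix.submatrix_apply, Dmat_apply, Fin.val_succ, Fin.val_castSucc,
      binomEntry_succ_left, binomEntry_succ_right, f, g, map_mul]
    have e : ((j + 1 : ℕ) : ℤ) - ((i + 1 : ℕ) : ℤ) + k = (j : ℤ) - (i : ℤ) + k := by
      push_cast; ring
    rw [e, show c + 1 + 1 = c + 2 by ring]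
    ring
  have h01 : ((Dmat (n + 2) k c).submatrix Fin.castSucc Fin.succ).det = _ :=
    hscale (n + 1) (k + 1) (c + 1) c _ <| by
    intro i j
    simp only [Matrix.submatrix_apply, Dmat_apply, Fin.val_succ, Fin.val_castSucc,
      binomEntry_succ_right, f, g, map_mul]
    have e : ((j + 1 : ℕ) : ℤ) - (i : ℤ) + k = (j : ℤ) - (i : ℤ) + (k + 1) := by
      push_cast; ring
    rw [e]
    ring
  rw [h00, h10, h11, hin, h01] at key
  have hg (i : ℕ) : g c (i + 1) = g (c + 1) i := by
    simp only [g]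
    congr 2
    push_cast
    ring
  rw [Finset.prod_range_succ, Finset.prod_range_succ _ n,
    Finset.prod_range_succ' (fun i => LaurentPolynomial.C (g c i))] at key
  simp only [hg] at key
  have hfg : (∏ i ∈ Finset.range n, LaurentPolynomial.C (f i)) *
      (∏ i ∈ Finset.range n, LaurentPolynomial.C (g (c + 1) i)) ≠ (0 : RQ) := by
    refine mul_ne_zero ?_ ?_ <;>
      refine Finset.prod_ne_zero_iff.mpr fun i _ => LaurentPolynomial.C_ne_zero_of_ne_zero ?_
    · simp only [f, ne_eq, Polynomial.C_eq_zero, inv_eq_zero]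
      positivity
    · exact Polynomial.X_add_C_ne_zero _
  have hfn : (n + 1 : RQ) * LaurentPolynomial.C (f n) = 1 := by
    have : (n + 1 : RQ) = LaurentPolynomial.C (Polynomial.C (n + 1 : ℚ)) := by simp
    rw [this, ← map_mul, ← Polynomial.C_mul, mul_inv_cancel₀ (by positivity)]
    simp
  have hg0 : g c 0 = Polynomial.X + Polynomial.C (c + 1 : ℚ) := by simp [g]
  have hgn : g (c + 1) n = Polynomial.X + Polynomial.C (c + n + 2 : ℚ) := by
    simp only [g]
    congr 2
    push_cast
    ring
  rw [← hg0, ← hgn]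
  apply mul_left_cancel₀ hfg
  change dd (n + 2) k c * _ = dd (n + 1) k c * _ - dd (n + 1) (k - 1) (c + 1) * _ at key
  generalize (∏ i ∈ Finset.range n, LaurentPolynomial.C (f i)) = P at *
  generalize (∏ i ∈ Finset.range n, LaurentPolynomial.C (g (c + 1) i)) = Q at *
  linear_combination (n + 1 : RQ) * key + P * Q * (LaurentPolynomial.C (g (c + 1) n) *
          (dd (n + 1) k c * dd (n + 1) k (c + 2)) - LaurentPolynomial.C (g c 0) *
          (dd (n + 1) (k - 1) (c + 1) * dd (n + 1) (k + 1) (c + 1))) * hfn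

/-- The unit `-q` of ℚ[x][q,q⁻¹]. -/
def negQ : RQˣ where
  val := -LaurentPolynomial.T 1
  inv := -LaurentPolynomial.T (-1)
  val_inv := by
    have h := LaurentPolynomial.T_add (R := ℚ[X]) 1 (-1)
    rw [add_neg_cancel, LaurentPolynomial.T_zero] at h
    linear_combination -h
  inv_val := by
    have h := LaurentPolynomial.T_add (R := ℚ[X]) 1 (-1)
    rw [add_neg_cancel, LaurentPolynomial.T_zero] at h
    linear_combination -h

theorem negQ_val : (negQ : RQ) = -LaurentPolynomial.T 1 := rfl

theorem negQ_inv_val : ((negQ⁻¹ : RQˣ) : RQ) = -LaurentPolynomial.T (-1) := rfl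

theorem negQ_pow (l : ℕ) : (negQ : RQ) ^ l = (-1) ^ l * LaurentPolynomial.T (l : ℤ) := by
  have h := LaurentPolynomial.T_pow (R := ℚ[X]) 1 l
  rw [mul_one] at h
  rw [negQ_val, ← h, ← mul_pow]
  congr 1
  ring

theorem negQ_inv_pow (l : ℕ) :
    ((negQ⁻¹ : RQˣ) : RQ) ^ l = (-1) ^ l * LaurentPolynomial.T (-(l : ℤ)) := by
  have h := LaurentPolynomial.T_pow (R := ℚ[X]) (-1) l
  rw [mul_neg_one] at h
  rw [negQ_inv_val, ← h, ← mul_pow]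
  congr 1
  ring

theorem one_sub_negQ_ne_zero : (1 - (negQ : RQ)) ≠ 0 := by
  have h : (1 - (negQ : RQ)) = Polynomial.toLaurent (Polynomial.X + Polynomial.C 1) := by
    rw [negQ_val, map_add, Polynomial.toLaurent_X, map_one, map_one]
    ring
  rw [h, Polynomial.toLaurent_ne_zero]
  exact Polynomial.X_add_C_ne_zero 1

theorem one_sub_negQ_mul_aQ (m : ℤ) : (1 - (negQ : RQ)) * aQ m = 1 - ((negQ ^ m : RQˣ) : RQ) := by
  unfold aQ
  split_ifs with h
  · obtain ⟨n, rfl⟩ := Int.eq_ofNat_of_zero_le h.le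
    simp only [Int.toNat_natCast, ← negQ_pow, zpow_natCast, Units.val_pow_eq_pow_val]
    rw [mul_neg_geom_sum]
  · obtain ⟨n, hn⟩ := Int.eq_ofNat_of_zero_le (neg_nonneg.mpr (not_lt.mp h))
    obtain rfl : m = -n := by omega
    have hterm (l : ℕ) : (-1 : RQ) ^ (l + 1) * LaurentPolynomial.T (-(l + 1 : ℤ))
        = ((negQ⁻¹ : RQˣ) : RQ) * ((negQ⁻¹ : RQˣ) : RQ) ^ l := by
      rw [← pow_succ', negQ_inv_pow]; push_cast; rfl
    simp only [neg_neg, Int.toNat_natCast, hterm, ← Finset.mul_sum, zpow_neg, zpow_natCast,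
      ← inv_pow, Units.val_pow_eq_pow_val]
    have hg := mul_neg_geom_sum ((negQ⁻¹ : RQˣ) : RQ) n
    have hu : (negQ : RQ) * ((negQ⁻¹ : RQˣ) : RQ) = 1 := negQ.mul_inv
    linear_combination hg + (∑ i ∈ Finset.range n, ((negQ⁻¹ : RQˣ) : RQ) ^ i) * hu

theorem aQ_neg (m : ℤ) : aQ (-m) = -((negQ ^ (-m) : RQˣ) : RQ) * aQ m := by
  apply mul_left_cancel₀ one_sub_negQ_ne_zero
  have hu : ((negQ ^ (-m) : RQˣ) : RQ) * ((negQ ^ m : RQˣ) : RQ) = 1 := by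
    rw [← Units.val_mul, ← zpow_add]; simp
  linear_combination one_sub_negQ_mul_aQ (-m) +
    ((negQ ^ (-m) : RQˣ) : RQ) * one_sub_negQ_mul_aQ m - hu

theorem Matrix.det_eq_of_transpose_scaling {R : Type*} [CommRing R] [IsDomain R] {n : ℕ}
    (A B : Matrix (Fin n) (Fin n) R) (w u u' : Fin n → R) (v : R) (hw : ∀ i, w i ≠ 0)
    (hu : ∀ i, u i * u' i = 1)
    (h : ∀ i j, w j * A j i = v * u i * u' j * (w i * B i j)) :
    A.det = v ^ n * B.det := by
  have hS : (Matrix.of fun i j => w i * A i j).transpose =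
      Matrix.of fun i j => (v * u i) * (Matrix.of fun i j => u' j *
        (Matrix.of fun i j => w i * B i j) i j) i j := by
    ext1 i j
    simp only [Matrix.transpose_apply, Matrix.of_apply, h]
    ring
  have h := congrArg Matrix.det hS
  rw [Matrix.det_transpose, Matrix.det_mul_column w, Matrix.det_mul_column fun i => v * u i,
    Matrix.det_mul_row u', Matrix.det_mul_column w,
    Finset.prod_mul_distrib, Finset.prod_const, Finset.card_univ, Fintype.card_fin] at h
  have hcancel : (∏ i, u i) * ∏ i, u' i = 1 := by
    rw [← Finset.prod_mul_distrib]
    exact Finset.prod_eq_one fun i _ => hu i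
  apply mul_left_cancel₀ (Finset.prod_ne_zero_iff.mpr fun i _ => hw i : ∏ i, w i ≠ 0)
  rw [h]
  linear_combination (v ^ n * (∏ i, w i) * B.det) * hcancel

theorem dd_neg (n : ℕ) (k c : ℤ) :
    dd n (-k) c = (-((negQ ^ (-k) : RQˣ) : RQ)) ^ n * dd n k c := by
  refine Matrix.det_eq_of_transpose_scaling (Dmat n (-k) c) (Dmat n k c)
    (fun i => LaurentPolynomial.C (binomEntry c 0 i)) (fun i => ((negQ ^ (i : ℤ) : RQˣ) : RQ))
    (fun i => ((negQ ^ (-(i : ℤ)) : RQˣ) : RQ)) _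
    (fun i => LaurentPolynomial.C_ne_zero_of_ne_zero (binomEntry_zero_ne_zero c i)) ?_ ?_
  · intro i
    rw [← Units.val_mul, ← zpow_add]
    simp
  · intro i j
    have e : (i : ℤ) - j + -k = -((j : ℤ) - i + k) := by ring
    have e2 : -((j : ℤ) - i + k) = -k + i + -(j : ℤ) := by ring
    have hb := congrArg (LaurentPolynomial.C : ℚ[X] → RQ) (binomEntry_zero_mul_comm c i j)
    rw [map_mul, map_mul] at hb
    rw [Dmat_apply, Dmat_apply, e, aQ_neg, e2, zpow_add, zpow_add, Units.val_mul, Units.val_mul]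
    linear_combination ((negQ ^ (-k) : RQˣ) : RQ) * ((negQ ^ (i : ℤ) : RQˣ) : RQ) *
      ((negQ ^ (-(j : ℤ)) : RQˣ) : RQ) * aQ ((j : ℤ) - i + k) * hb

theorem dd_zero_of_odd {n : ℕ} (hn : Odd n) (c : ℤ) : dd n 0 c = 0 := by
  have h := dd_neg n 0 c
  simp only [neg_zero, zpow_zero, Units.val_one] at h
  have h1 : (-1 : RQ) ^ n = -1 := by
    obtain ⟨m, rfl⟩ := hn
    have h2 : (-1 : RQ) ^ 2 = 1 := by ring
    rw [pow_succ, pow_mul, h2, one_pow, one_mul]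
  have h2 : (2 : RQ) * dd n 0 c = 0 := by linear_combination h + dd n 0 c * h1
  have h3 : (2 : RQ) ≠ 0 := by
    have := LaurentPolynomial.C_ne_zero_of_ne_zero (two_ne_zero : (2 : ℚ[X]) ≠ 0)
    rwa [map_ofNat] at this
  exact (mul_eq_zero.mp h2).resolve_left h3

theorem dd_neg_one (n : ℕ) (c : ℤ) :
    dd n (-1) c = LaurentPolynomial.T (-(n : ℤ)) * dd n 1 c := by
  have h : -((negQ ^ (-1 : ℤ) : RQˣ) : RQ) = LaurentPolynomial.T (-1) := by
    rw [zpow_neg, zpow_one, negQ_inv_val]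
    ring
  rw [dd_neg, h, LaurentPolynomial.T_pow, mul_neg_one]

/-- The polynomial `q ^ r * a_m(q)`, for `-m ≤ r`. -/
def aPoly (r : ℕ) (m : ℤ) : Polynomial (Polynomial ℚ) :=
  if 0 < m then ∑ l ∈ Finset.range m.toNat, (-1) ^ l * Polynomial.X ^ (l + r)
  else -∑ l ∈ Finset.range (-m).toNat, (-1) ^ (l + 1) * Polynomial.X ^ (r - (l + 1))

theorem toLaurent_aPoly {r : ℕ} {m : ℤ} (h : -m ≤ r) :
    Polynomial.toLaurent (aPoly r m) = LaurentPolynomial.T (r : ℤ) * aQ m := by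
  have hneg : Polynomial.toLaurent (-1 : ℚ[X][X]) = (-1 : RQ) := by rw [map_neg, map_one]
  unfold aPoly aQ
  split_ifs with hm
  · rw [map_sum, Finset.mul_sum]
    refine Finset.sum_congr rfl fun l _ => ?_
    rw [map_mul, map_pow, hneg, Polynomial.toLaurent_X_pow, Nat.cast_add, LaurentPolynomial.T_add]
    ring
  · have hs : Polynomial.toLaurent (∑ l ∈ Finset.range (-m).toNat,
        (-1 : ℚ[X][X]) ^ (l + 1) * Polynomial.X ^ (r - (l + 1))) = LaurentPolynomial.T (r : ℤ) *
        ∑ l ∈ Finset.range (-m).toNat,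
          (-1 : RQ) ^ (l + 1) * LaurentPolynomial.T (-(l + 1 : ℤ)) := by
      rw [map_sum, Finset.mul_sum]
      refine Finset.sum_congr rfl fun l hl => ?_
      have hl := Finset.mem_range.mp hl
      have e : ((r - (l + 1) : ℕ) : ℤ) = r + -(l + 1 : ℤ) := by omega
      rw [map_mul, map_pow, hneg, Polynomial.toLaurent_X_pow, e, LaurentPolynomial.T_add]
      ring
    rw [map_neg, hs]
    ring

/-- `Dmat n (a - b) c` with rows and columns multiplied by powers of `q` that clear all
negative powers of `q`. -/
def polyMat (n a b : ℕ) (c : ℤ) : Matrix (Fin n) (Fin n) (Polynomial (Polynomial ℚ)) :=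
  Matrix.of fun i j => Polynomial.C (binomEntry c i j) *
    aPoly ((i + 1 - a) + (b - (j + 1))) ((j : ℤ) - i + (a - b))

theorem toLaurent_det_polyMat (n a b : ℕ) (c : ℤ) :
    Polynomial.toLaurent (polyMat n a b c).det =
      LaurentPolynomial.T ((∑ i ∈ Finset.range n, ((i + 1 - a) + (b - (i + 1))) : ℕ) : ℤ) *
        dd n (a - b) c := by
  have hT (f : ℕ → ℕ) : (LaurentPolynomial.T ((∑ i ∈ Finset.range n, f i : ℕ) : ℤ) : RQ)
      = ∏ i : Fin n, LaurentPolynomial.T ((f i : ℕ) : ℤ) := by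
    rw [Finset.sum_range, ← Polynomial.toLaurent_X_pow, ← Finset.prod_pow_eq_pow_sum, map_prod]
    simp only [Polynomial.toLaurent_X_pow]
  have hM : (polyMat n a b c).map Polynomial.toLaurent =
      Matrix.of fun i j : Fin n => LaurentPolynomial.T ((i + 1 - a : ℕ) : ℤ) *
        (Matrix.of fun i j : Fin n => LaurentPolynomial.T ((b - (j + 1) : ℕ) : ℤ) *
          Dmat n (a - b) c i j) i j := by
    ext1 i j
    simp only [Matrix.map_apply, polyMat, Matrix.of_apply, map_mul, Polynomial.toLaurent_C]
    rw [toLaurent_aPoly (by omega), Dmat_apply, Nat.cast_add, LaurentPolynomial.T_add]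
    ring
  rw [RingHom.map_det, RingHom.mapMatrix_apply, hM,
    Matrix.det_mul_column (fun i : Fin n => LaurentPolynomial.T ((i + 1 - a : ℕ) : ℤ)),
    Matrix.det_mul_row (fun j : Fin n => LaurentPolynomial.T ((b - (j + 1) : ℕ) : ℤ)),
    Finset.sum_add_distrib, Nat.cast_add, LaurentPolynomial.T_add, hT, hT, mul_assoc]
  rfl

theorem sum_range_two_mul_scaling (m : ℕ) :
    ∑ i ∈ Finset.range (2 * m), ((i + 1 - m) + (m - (i + 1))) = m ^ 2 := by
  rw [two_mul, Finset.sum_range_add, ← Finset.sum_add_distrib, Finset.sum_congr rfl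
    (g := fun _ => m) fun i hi => ?_, Finset.sum_const, Finset.card_range, smul_eq_mul, sq]
  have := Finset.mem_range.mp hi
  omega

theorem sum_range_two_mul_add_one_scaling (m : ℕ) :
    ∑ i ∈ Finset.range (2 * m + 1), ((i + 1 - (m + 1)) + (m - (i + 1))) = m ^ 2 := by
  rw [show 2 * m + 1 = m + (1 + m) by ring, Finset.sum_range_add, Finset.sum_range_add,
    Finset.sum_range_one, add_left_comm, ← Finset.sum_add_distrib, Finset.sum_congr rfl
    (g := fun _ => m) fun i hi => ?_, Finset.sum_const, Finset.card_range, smul_eq_mul, sq]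
  · omega
  · have := Finset.mem_range.mp hi
    omega

theorem ascPochhammer_eval_eq_prod_range (j : ℕ) (y : ℚ) :
    (ascPochhammer ℚ j).eval y = ∏ t ∈ Finset.range j, (y + t) := by
  induction j with
  | zero => simp
  | succ j ih => rw [ascPochhammer_succ_eval, ih, Finset.prod_range_succ]

theorem eval_zero_binomEntry (i j : ℕ) : (binomEntry 0 i j).eval 0 =
    (j.factorial : ℚ)⁻¹ * (ascPochhammer ℚ j).eval (i + 1 : ℚ) := by
  rw [binomEntry_eq_prod, ascPochhammer_eval_eq_prod_range, Polynomial.eval_mul,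
    Polynomial.eval_prod]
  congr 1
  · simp
  · refine Finset.prod_congr rfl fun t _ => ?_
    simp
    ring

theorem eval_zero_binomEntry_comm (i j : ℕ) :
    (binomEntry 0 i j).eval 0 = (binomEntry 0 j i).eval 0 := by
  have h1 (i : ℕ) : (binomEntry 0 0 i).eval 0 = 1 := by
    rw [eval_zero_binomEntry, Nat.cast_zero, zero_add, ascPochhammer_eval_one]
    exact inv_mul_cancel₀ (by positivity)
  simpa [h1] using congrArg (Polynomial.eval 0) (binomEntry_zero_mul_comm 0 i j)

theorem det_eval_zero_binomEntry_ne_zero (m : ℕ) :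
    (Matrix.of fun s t : Fin m => (binomEntry 0 (m + s) t).eval 0).det ≠ 0 := by
  have h : (Matrix.of fun s t : Fin m => (binomEntry 0 (m + s) t).eval 0) =
      Matrix.of fun s t : Fin m => ((t : ℕ).factorial : ℚ)⁻¹ * (Matrix.of fun s t : Fin m =>
        (ascPochhammer ℚ t).eval ((m + s : ℕ) + 1 : ℚ)) s t := by
    ext s t
    simp only [Matrix.of_apply, eval_zero_binomEntry]
  rw [h, Matrix.det_mul_row fun t : Fin m => ((t : ℕ).factorial : ℚ)⁻¹,
    ← Matrix.det_eval_matrixOfPolynomials_eq_det_vandermonde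
      (fun s : Fin m => ((m + s : ℕ) + 1 : ℚ)) (fun t => ascPochhammer ℚ t)
      (fun t => ascPochhammer_natDegree _ _) (fun t => monic_ascPochhammer _ _)]
  refine mul_ne_zero (Finset.prod_ne_zero_iff.mpr fun t _ => ?_) ?_
  · exact inv_ne_zero (by positivity)
  · rw [Matrix.det_vandermonde_ne_zero_iff]
    intro s t hst
    simpa [Fin.ext_iff] using hst

theorem aPoly_coeff_zero_of_pos {r : ℕ} (hr : 0 < r) (m : ℤ) (h : -m < r) :
    (aPoly r m).coeff 0 = 0 := by
  rw [Polynomial.coeff_zero_eq_eval_zero]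
  unfold aPoly
  split_ifs with hm
  · rw [Polynomial.eval_finsetSum]
    refine Finset.sum_eq_zero fun l _ => ?_
    simp [hr.ne']
  · rw [Polynomial.eval_neg, Polynomial.eval_finsetSum, neg_eq_zero]
    refine Finset.sum_eq_zero fun l hl => ?_
    have := Finset.mem_range.mp hl
    have : r - (l + 1) ≠ 0 := by omega
    simp [this]

theorem aPoly_zero_coeff_zero (m : ℕ) : (aPoly 0 (m + 1 : ℤ)).coeff 0 = 1 := by
  rw [Polynomial.coeff_zero_eq_eval_zero]
  unfold aPoly
  rw [if_pos (by omega), Polynomial.eval_finsetSum, show ((m : ℤ) + 1).toNat = m + 1 by omega,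
    Finset.sum_range_succ', Finset.sum_eq_zero fun l _ => by simp]
  simp

theorem aPoly_self_coeff_zero (m : ℕ) :
    (aPoly (m + 1) (-(m + 1) : ℤ)).coeff 0 = -(-1) ^ (m + 1) := by
  rw [Polynomial.coeff_zero_eq_eval_zero]
  unfold aPoly
  rw [if_neg (by omega), Polynomial.eval_neg, Polynomial.eval_finsetSum,
    show (- -((m : ℤ) + 1)).toNat = m + 1 by omega, Finset.sum_range_succ,
    Finset.sum_eq_zero fun l hl => ?_]
  · simp
  · have := Finset.mem_range.mp hl
    have : m - l ≠ 0 := by omega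
    simp [this]

/-- At `x = q = 0` the cleared matrix is block anti-triangular with invertible blocks. -/
theorem det_polyMat_ne_zero (m : ℕ) : (polyMat (2 * m) m m 0).det ≠ 0 := by
  intro h0
  let φ : ℚ[X][X] →+* ℚ := (Polynomial.evalRingHom 0).comp Polynomial.constantCoeff
  let e : Fin m ⊕ Fin m ≃ Fin (2 * m) := finSumFinEquiv.trans (finCongr (two_mul m).symm)
  let N := (polyMat (2 * m) m m 0).map φ
  have hN : N.det = 0 := by
    change (φ.mapMatrix _).det = 0
    rw [← RingHom.map_det, h0, map_zero]
  have hsub : (N.submatrix e ((Equiv.sumComm _ _).trans e)).det = 0 := by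
    rw [← abs_eq_zero, Matrix.abs_det_submatrix_equiv_equiv, hN, abs_zero]
  let W := Matrix.of fun s t : Fin m => (binomEntry 0 (m + s) t).eval 0
  let L := Matrix.of fun s t : Fin m => -(-1 : ℚ) ^ (m + s : ℕ) * (Matrix.of fun s t : Fin m =>
    (-1 : ℚ) ^ (t : ℕ) * W s t) s t
  have hφ (i j : Fin (2 * m)) : N i j = (binomEntry 0 i j).eval 0 *
      ((aPoly ((i + 1 - m) + (m - (j + 1))) ((j : ℤ) - i)).coeff 0).eval 0 := by
    simp [N, φ, polyMat]
  have hblocks : N.submatrix e ((Equiv.sumComm _ _).trans e) =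
      Matrix.fromBlocks W.transpose (N.submatrix (e ∘ Sum.inl) (e ∘ Sum.inl)) 0 L := by
    ext (s | s) (t | t)
    · have hs := s.2
      have e1 : ((m + t : ℕ) : ℤ) - (s : ℕ) = (m + t - s - 1 : ℕ) + 1 := by omega
      have e2 : (s + 1 - m) + (m - ((m + t : ℕ) + 1)) = 0 := by omega
      simp only [Matrix.submatrix_apply, hφ, Matrix.fromBlocks_apply₁₁, Matrix.transpose_apply]
      simp only [e, W, Equiv.trans_apply, Equiv.sumComm_apply, Sum.swap_inl,
        finSumFinEquiv_apply_left, finSumFinEquiv_apply_right, finCongr_apply, Fin.val_cast,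
        Fin.val_castAdd, Fin.val_natAdd, Matrix.of_apply]
      rw [e1, e2, aPoly_zero_coeff_zero, eval_zero_binomEntry_comm]
      simp
    · rfl
    · simp only [Matrix.submatrix_apply, hφ, Matrix.fromBlocks_apply₂₁, Matrix.zero_apply]
      simp only [e, Equiv.trans_apply, Equiv.sumComm_apply, Sum.swap_inl,
        finSumFinEquiv_apply_right, finCongr_apply, Fin.val_cast, Fin.val_natAdd]
      rw [aPoly_coeff_zero_of_pos (by omega) _ (by omega)]
      simp
    · have ht := t.2
      have e1 : ((t : ℕ) : ℤ) - (m + s : ℕ) = -((m + s - t - 1 : ℕ) + 1) := by omega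
      have e2 : ((m + s : ℕ) + 1 - m) + (m - ((t : ℕ) + 1)) = (m + s - t - 1) + 1 := by omega
      have e3 : (-1 : ℚ) ^ (m + s - t - 1 + 1 : ℕ) = (-1) ^ (m + s : ℕ) * (-1) ^ (t : ℕ) := by
        rw [← pow_add, show m + s + t = (m + s - t - 1 + 1) + 2 * t by omega,
          pow_add _ (m + s - t - 1 + 1) (2 * t : ℕ), pow_mul]
        simp
      simp only [Matrix.submatrix_apply, hφ, Matrix.fromBlocks_apply₂₂]
      simp only [e, W, L, Equiv.trans_apply, Equiv.sumComm_apply, Sum.swap_inr,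
        finSumFinEquiv_apply_left, finSumFinEquiv_apply_right, finCongr_apply, Fin.val_cast,
        Fin.val_castAdd, Fin.val_natAdd, Matrix.of_apply]
      rw [e1, e2, aPoly_self_coeff_zero]
      simp only [Polynomial.eval_neg, Polynomial.eval_pow, Polynomial.eval_one]
      rw [e3]
      ring
  rw [hblocks, Matrix.det_fromBlocks_zero₂₁, Matrix.det_transpose,
    Matrix.det_mul_column (fun s : Fin m => -(-1 : ℚ) ^ (m + s : ℕ)),
    Matrix.det_mul_row (fun t : Fin m => (-1 : ℚ) ^ (t : ℕ))] at hsub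
  have hW : W.det ≠ 0 := det_eval_zero_binomEntry_ne_zero m
  have h1 : ∏ s : Fin m, -(-1 : ℚ) ^ (m + s : ℕ) ≠ 0 :=
    Finset.prod_ne_zero_iff.mpr fun s _ => by simp
  have h2 : ∏ t : Fin m, (-1 : ℚ) ^ (t : ℕ) ≠ 0 :=
    Finset.prod_ne_zero_iff.mpr fun t _ => by simp
  exact mul_ne_zero hW (mul_ne_zero h1 (mul_ne_zero h2 hW)) hsub

theorem shiftX_mul (c : ℚ) (f g : ℚ[X][X]) : shiftX c (f * g) = shiftX c f * shiftX c g :=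
  Polynomial.map_mul _

theorem shiftX_pow (c : ℚ) (f : ℚ[X][X]) (n : ℕ) : shiftX c (f ^ n) = shiftX c f ^ n :=
  Polynomial.map_pow _ n

theorem shiftX_C (c : ℚ) (p : ℚ[X]) :
    shiftX c (Polynomial.C p) = Polynomial.C (p.comp (Polynomial.X + Polynomial.C c)) :=
  Polynomial.map_C _

theorem shiftX_shiftX (a b : ℚ) (f : ℚ[X][X]) : shiftX a (shiftX b f) = shiftX (b + a) f := by
  unfold shiftX
  rw [Polynomial.map_map]
  congr 1
  refine Polynomial.ringHom_ext (fun r => ?_) ?_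
  · simp
  · simp
    ring

theorem shiftX_zero (f : ℚ[X][X]) : shiftX 0 f = f := by
  have h : (Polynomial.aeval (Polynomial.X + Polynomial.C (0 : ℚ))).toRingHom =
      RingHom.id ℚ[X] := Polynomial.ringHom_ext (fun r => by simp) (by simp)
  rw [shiftX, h, Polynomial.map_id]

theorem shiftX_ne_zero (c : ℚ) {f : ℚ[X][X]} (hf : f ≠ 0) : shiftX c f ≠ 0 := by
  intro h
  apply hf
  rw [← shiftX_zero f, ← add_neg_cancel c, ← shiftX_shiftX, h, shiftX, Polynomial.map_zero]

theorem shiftX_aPoly (c : ℚ) (r : ℕ) (m : ℤ) : shiftX c (aPoly r m) = aPoly r m := by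
  unfold shiftX aPoly
  split_ifs <;> simp [Polynomial.map_sum]

theorem binomEntry_comp (c d : ℤ) (i j : ℕ) :
    (binomEntry c i j).comp (Polynomial.X + Polynomial.C (d : ℚ)) = binomEntry (c + d) i j := by
  rw [binomEntry_eq_prod, binomEntry_eq_prod, Polynomial.mul_comp, Polynomial.prod_comp,
    Polynomial.C_comp]
  congr 1
  refine Finset.prod_congr rfl fun t _ => ?_
  simp
  ring

theorem shiftX_det_polyMat (n a b : ℕ) (c d : ℤ) :
    shiftX d (polyMat n a b c).det = (polyMat n a b (c + d)).det := by
  change Polynomial.mapRingHom _ _ = _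
  rw [RingHom.map_det]
  congr 1
  ext1 i j
  change shiftX d (polyMat n a b c i j) = _
  rw [polyMat, polyMat, Matrix.of_apply, Matrix.of_apply, shiftX_mul, shiftX_C, shiftX_aPoly,
    binomEntry_comp]

/-- The polynomial `(-1) ^ m * q ^ (m ^ 2) * d_{2m,0}(x + c, q)`. -/
def evenDet (m : ℕ) (c : ℤ) : ℚ[X][X] := (-1) ^ m * (polyMat (2 * m) m m c).det

/-- The polynomial `q ^ (m ^ 2) * d_{2m+1,1}(x + c, q)`. -/
def oddDet (m : ℕ) (c : ℤ) : ℚ[X][X] := (polyMat (2 * m + 1) (m + 1) m c).det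

theorem toLaurent_evenDet (m : ℕ) (c : ℤ) : Polynomial.toLaurent (evenDet m c) =
    (-1) ^ m * (LaurentPolynomial.T ((m ^ 2 : ℕ) : ℤ) * dd (2 * m) 0 c) := by
  have hneg : Polynomial.toLaurent (-1 : ℚ[X][X]) = (-1 : RQ) := by rw [map_neg, map_one]
  rw [evenDet, map_mul, map_pow, hneg, toLaurent_det_polyMat, sum_range_two_mul_scaling, sub_self]

theorem toLaurent_oddDet (m : ℕ) (c : ℤ) : Polynomial.toLaurent (oddDet m c) =
    LaurentPolynomial.T ((m ^ 2 : ℕ) : ℤ) * dd (2 * m + 1) 1 c := by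
  rw [oddDet, toLaurent_det_polyMat, sum_range_two_mul_add_one_scaling, Nat.cast_add_one,
    add_sub_cancel_left]

theorem shiftX_evenDet (m : ℕ) (c d : ℤ) : shiftX d (evenDet m c) = evenDet m (c + d) := by
  rw [evenDet, evenDet, shiftX_mul, shiftX_det_polyMat, shiftX_pow]
  simp [shiftX]

theorem shiftX_oddDet (m : ℕ) (c d : ℤ) : shiftX d (oddDet m c) = oddDet m (c + d) :=
  shiftX_det_polyMat ..

theorem evenDet_ne_zero (m : ℕ) (c : ℤ) : evenDet m c ≠ 0 := by
  rw [← zero_add c, ← shiftX_evenDet]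
  exact shiftX_ne_zero _ (mul_ne_zero (pow_ne_zero _ (neg_ne_zero.mpr one_ne_zero))
    (det_polyMat_ne_zero m))

theorem evenDet_succ_mul_evenDet (m : ℕ) (c : ℤ) :
    (2 * m + 1 : ℚ[X][X]) * (evenDet (m + 1) c * evenDet m (c + 2)) =
      Polynomial.C (Polynomial.X + Polynomial.C (c + 1 : ℚ)) * oddDet m (c + 1) ^ 2 := by
  apply Polynomial.toLaurent_injective
  have h := dd_condensation (2 * m) 0 c
  rw [dd_zero_of_odd (odd_two_mul_add_one m), zero_sub, dd_neg_one, zero_add] at h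
  have hT : (LaurentPolynomial.T (((m + 1) ^ 2 : ℕ) : ℤ) * LaurentPolynomial.T ((m ^ 2 : ℕ) : ℤ) *
      LaurentPolynomial.T (-((2 * m + 1 : ℕ) : ℤ)) : RQ) =
      LaurentPolynomial.T ((m ^ 2 : ℕ) : ℤ) ^ 2 := by
    rw [← LaurentPolynomial.T_add, ← LaurentPolynomial.T_add, LaurentPolynomial.T_pow]
    congr 1
    push_cast
    ring
  have hs : ((-1 : RQ) ^ m) ^ 2 = 1 := by
    rw [← pow_mul, mul_comm, pow_mul, show (-1 : RQ) ^ 2 = 1 by ring, one_pow]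
  have hc : Polynomial.toLaurent (2 * m + 1 : ℚ[X][X]) = (2 * m + 1 : RQ) := by
    rw [map_add, map_mul, map_natCast, map_ofNat, map_one]
  rw [map_mul, map_mul, map_mul, map_pow, hc, toLaurent_evenDet, toLaurent_evenDet,
    toLaurent_oddDet, Polynomial.toLaurent_C, pow_succ]
  rw [Nat.cast_mul, Nat.cast_ofNat] at h
  change (2 * m + 1 : RQ) * (dd (2 * (m + 1)) 0 c * dd (2 * m) 0 (c + 2)) = _ at h
  generalize dd (2 * (m + 1)) 0 c = D₂ at h ⊢
  generalize dd (2 * m) 0 (c + 2) = D₀ at h ⊢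
  generalize dd (2 * m + 1) 1 (c + 1) = D₁ at h ⊢
  generalize (LaurentPolynomial.T (((m + 1) ^ 2 : ℕ) : ℤ) : RQ) = t₂ at *
  generalize (LaurentPolynomial.T ((m ^ 2 : ℕ) : ℤ) : RQ) = t₀ at *
  generalize (-1 : RQ) ^ m = s at *
  generalize (LaurentPolynomial.T (-((2 * m + 1 : ℕ) : ℤ)) : RQ) = t at *
  generalize (LaurentPolynomial.C (Polynomial.X + Polynomial.C (c + 1 : ℚ)) : RQ) = y at *
  linear_combination (-s ^ 2 * t₂ * t₀) * h + t₂ * t₀ * t * y * D₁ ^ 2 * hs + y * D₁ ^ 2 * hT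

/-- The product `∏_{i<m} (x + c + 2i + 1)`. -/
def linProd (m : ℕ) (c : ℚ) : ℚ[X] :=
  ∏ i ∈ Finset.range m, (Polynomial.X + Polynomial.C (c + 2 * i + 1))

theorem linProd_succ (m : ℕ) (c : ℚ) :
    linProd (m + 1) c = linProd m c * (Polynomial.X + Polynomial.C (c + 2 * m + 1)) :=
  Finset.prod_range_succ _ m

theorem linProd_succ_neg_one (m : ℕ) : linProd (m + 1) (-1) = Polynomial.X * linProd m 1 := by
  rw [linProd, Finset.prod_range_succ', mul_comm, linProd]
  congr 1
  · simp
  · refine Finset.prod_congr rfl fun i _ => ?_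
    congr 2
    push_cast
    ring

theorem linProd_ne_zero (m : ℕ) (c : ℚ) : linProd m c ≠ 0 :=
  Finset.prod_ne_zero_iff.mpr fun _ _ => Polynomial.X_add_C_ne_zero _

theorem linProd_comp (m : ℕ) (c d : ℚ) :
    (linProd m c).comp (Polynomial.X + Polynomial.C d) = linProd m (c + d) := by
  rw [linProd, linProd, Polynomial.prod_comp]
  refine Finset.prod_congr rfl fun i _ => ?_
  simp
  ring

theorem squarefree_C_linProd (m : ℕ) (c : ℚ) :
    Squarefree (Polynomial.C (linProd m c) : ℚ[X][X]) := by
  have e (a : ℚ) : (Polynomial.X + Polynomial.C a) = Polynomial.X - Polynomial.C (-a) := by simp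
  rw [linProd, map_prod]
  refine Finset.squarefree_prod_of_pairwise_isCoprime (fun i _ j _ hij => ?_) fun i _ => ?_
  · refine (IsCoprime.map ?_ Polynomial.C).isRelPrime
    rw [e, e]
    refine Polynomial.isCoprime_X_sub_C_of_isUnit_sub (Ne.isUnit fun h => hij ?_)
    have : (i : ℚ) = j := by linarith
    exact_mod_cast this
  · refine (Polynomial.prime_C_iff.mpr ?_).squarefree
    rw [e]
    exact Polynomial.prime_X_sub_C _

/-- The product `∏_{i=1}^{m} ⌊i/2⌋! / i!`. -/
def factProd (m : ℕ) : ℚ :=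
  ∏ i ∈ Finset.range m, (((i + 1) / 2).factorial : ℚ) / ((i + 1).factorial : ℚ)

theorem factProd_ne_zero (m : ℕ) : factProd m ≠ 0 :=
  Finset.prod_ne_zero_iff.mpr fun _ _ => by positivity

theorem factProd_two_mul_sq (m : ℕ) :
    factProd (2 * m) ^ 2 = factProd (2 * m + 1) * factProd (2 * m - 1) * (2 * m + 1) := by
  cases m with
  | zero => simp [factProd]
  | succ k =>
    have h1 : factProd (2 * (k + 1)) =
        factProd (2 * k + 1) * ((k + 1).factorial / (2 * k + 2).factorial) := by
      rw [mul_add_one, factProd, Finset.prod_range_succ, show (2 * k + 1 + 1) / 2 = k + 1 by omega]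
      rfl
    have h2 : factProd (2 * (k + 1) + 1) =
        factProd (2 * (k + 1)) * ((k + 1).factorial / ((2 * k + 3) * (2 * k + 2).factorial)) := by
      rw [factProd, Finset.prod_range_succ, show (2 * (k + 1) + 1) / 2 = k + 1 by omega,
        Nat.factorial_succ (2 * (k + 1))]
      push_cast
      rw [show (2 * (k + 1 : ℚ) + 1) = 2 * k + 3 by ring]
      rfl
    rw [show 2 * (k + 1) - 1 = 2 * k + 1 by omega, h2, h1]
    have := Nat.cast_ne_zero (R := ℚ).mpr (Nat.factorial_ne_zero (2 * k + 2))
    have h3 : (2 * k + 3 : ℚ) ≠ 0 := by positivity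
    push_cast
    field_simp
    ring

theorem exists_factor_of_mul_sq_eq {R : Type*} [CommRing R] [IsDomain R]
    [UniqueFactorizationMonoid R] {x P E G f : R} (hxP : Squarefree (x * P)) (hf : f ≠ 0)
    (h : E * (P * f ^ 2) = x * G ^ 2) : ∃ u, G = P * u * f ∧ E = x * P * u ^ 2 := by
  have hxP0 := hxP.ne_zero
  have hx : x ≠ 0 := left_ne_zero_of_mul hxP0
  obtain ⟨H, hH⟩ : f ∣ x * G := by
    have : f ^ 2 ∣ (x * G) ^ 2 := ⟨E * (x * P), by linear_combination (-x) * h⟩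
    exact (IsIntegrallyClosed.pow_dvd_pow_iff two_ne_zero).mp this
  have hE : E * (x * P) = H ^ 2 := mul_right_cancel₀ (pow_ne_zero 2 hf)
    (by linear_combination x * h + (x * G + f * H) * hH)
  obtain ⟨u, rfl⟩ := (hxP.dvd_pow_iff_dvd two_ne_zero).mp (Dvd.intro_left _ hE)
  exact ⟨u, mul_left_cancel₀ hx (by linear_combination hH),
    mul_right_cancel₀ hxP0 (by linear_combination hE)⟩

/-- `f` is a solution for `F_m` in the evaluation of `d_{2m,0}`. -/
def IsEvenRoot (m : ℕ) (f : ℚ[X][X]) : Prop :=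
  ∀ c : ℤ, evenDet m c =
    Polynomial.C (Polynomial.C (factProd (2 * m - 1)) * linProd m c) * shiftX (c + 1) f ^ 2

theorem IsEvenRoot.ne_zero {m : ℕ} {f : ℚ[X][X]} (hf : IsEvenRoot m f) : f ≠ 0 := by
  rintro rfl
  have := hf 0
  simp [shiftX] at this
  exact evenDet_ne_zero m 0 this

theorem isEvenRoot_zero : IsEvenRoot 0 1 := by
  intro c
  simp [evenDet, shiftX, linProd, factProd]

theorem IsEvenRoot.exists_succ {m : ℕ} {f : ℚ[X][X]} (hf : IsEvenRoot m f) :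
    ∃ g, IsEvenRoot (m + 1) g ∧ ∀ c : ℤ, oddDet m c =
      Polynomial.C (Polynomial.C (factProd (2 * m)) * linProd m (c + 1)) *
        (shiftX c g * shiftX (c + 2) f) := by
  have h := evenDet_succ_mul_evenDet m (-1)
  rw [show (-1 : ℤ) + 2 = 1 by norm_num, hf 1] at h
  obtain ⟨u, hu₁, hu₂⟩ := exists_factor_of_mul_sq_eq
    (E := Polynomial.C (Polynomial.C ((2 * m + 1) * factProd (2 * m - 1))) * evenDet (m + 1) (-1))
    (x := Polynomial.C Polynomial.X) (P := Polynomial.C (linProd m 1)) (G := oddDet m 0)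
    (f := shiftX 2 f) (by
      rw [← map_mul, ← linProd_succ_neg_one]
      exact squarefree_C_linProd _ _) (shiftX_ne_zero _ hf.ne_zero) (by
      have h2 : (Polynomial.C (Polynomial.C 2) : ℚ[X][X]) = 2 := by
        rw [map_ofNat, map_ofNat]
      norm_num [h2] at h ⊢
      linear_combination h)
  have hl := factProd_ne_zero (2 * m)
  have hCl : (Polynomial.C (Polynomial.C (factProd (2 * m))) : ℚ[X][X]) *
      Polynomial.C (Polynomial.C (factProd (2 * m))⁻¹) = 1 := by
    rw [← map_mul, ← map_mul, mul_inv_cancel₀ hl, map_one, map_one]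
  refine ⟨Polynomial.C (Polynomial.C (factProd (2 * m))⁻¹) * u, fun c => ?_, fun c => ?_⟩
  · have hE : evenDet (m + 1) (-1) =
        Polynomial.C (Polynomial.C (factProd (2 * m + 1)) * linProd (m + 1) (-1)) *
          (Polynomial.C (Polynomial.C (factProd (2 * m))⁻¹) * u) ^ 2 := by
      have hk : (Polynomial.C (Polynomial.C ((2 * m + 1) * factProd (2 * m - 1))) : ℚ[X][X]) ≠ 0 :=
        Polynomial.C_ne_zero.mpr (Polynomial.C_ne_zero.mpr
          (mul_ne_zero (by positivity) (factProd_ne_zero _)))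
      have hsq := congrArg (fun r : ℚ => (Polynomial.C (Polynomial.C r) : ℚ[X][X]))
        (factProd_two_mul_sq m)
      apply mul_left_cancel₀ hk
      rw [hu₂, linProd_succ_neg_one]
      simp only [map_mul, map_pow] at hsq ⊢
      generalize (Polynomial.C (Polynomial.C (2 * (m : ℚ) + 1)) : ℚ[X][X]) = a at *
      generalize (Polynomial.C (Polynomial.C (factProd (2 * m))) : ℚ[X][X]) = l at *
      generalize (Polynomial.C (Polynomial.C (factProd (2 * m))⁻¹) : ℚ[X][X]) = l' at *
      linear_combination Polynomial.C Polynomial.X * Polynomial.C (linProd m 1) * u ^ 2 *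
        (l' ^ 2 * hsq - (l * l' + 1) * hCl)
    have hs := congrArg (shiftX ((c + 1 : ℤ) : ℚ)) hE
    rw [shiftX_evenDet, shiftX_mul, shiftX_pow, shiftX_C, Polynomial.mul_comp, Polynomial.C_comp,
      linProd_comp, add_comm c 1, neg_add_cancel_left, Int.cast_add, Int.cast_one,
      neg_add_cancel_left, add_comm (1 : ℚ)] at hs
    exact hs
  · have hs := congrArg (shiftX (c : ℚ)) hu₁
    rw [shiftX_oddDet, shiftX_mul, shiftX_mul, shiftX_C, linProd_comp, shiftX_shiftX, zero_add,
      add_comm (1 : ℚ), add_comm (2 : ℚ)] at hs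
    rw [hs, shiftX_mul, shiftX_C, Polynomial.C_comp, map_mul]
    linear_combination (-Polynomial.C (linProd m (c + 1)) * shiftX c u * shiftX (c + 2) f) * hCl

theorem dd_one_two_mul_eq {F : ℕ → ℚ[X][X]} (h0 : F 0 = 1) (hF : ∀ m, F m ≠ 0)
    (hG : ∀ (m : ℕ) (c : ℤ), oddDet m c =
      Polynomial.C (Polynomial.C (factProd (2 * m)) * linProd m (c + 1)) *
        (shiftX c (F (m + 1)) * shiftX (c + 2) (F m))) (m : ℕ) (c : ℤ) :
    dd (2 * m) 1 c = LaurentPolynomial.T (-(m * (m - 1) : ℤ)) *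
      LaurentPolynomial.C (Polynomial.C (factProd (2 * m - 1)) * linProd m (c + 1)) *
        (Polynomial.toLaurent (shiftX c (F m)) * Polynomial.toLaurent (shiftX (c + 2) (F m))) := by
  have hodd (c : ℤ) (m : ℕ) : LaurentPolynomial.T ((m ^ 2 : ℕ) : ℤ) * dd (2 * m + 1) 1 c =
      LaurentPolynomial.C (Polynomial.C (factProd (2 * m)) * linProd m (c + 1)) *
        (Polynomial.toLaurent (shiftX c (F (m + 1))) *
          Polynomial.toLaurent (shiftX (c + 2) (F m))) := by
    rw [← toLaurent_oddDet, hG, map_mul, map_mul Polynomial.toLaurent (shiftX _ _),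
      Polynomial.toLaurent_C]
  induction m generalizing c with
  | zero => simp [dd, h0, shiftX, linProd, factProd]
  | succ m ih =>
    have hcond := dd_condensation (2 * m) 1 c
    rw [sub_self, dd_zero_of_odd (odd_two_mul_add_one m), zero_mul, mul_zero, sub_zero,
      Nat.cast_mul, Nat.cast_ofNat] at hcond
    change (2 * m + 1 : RQ) * (dd (2 * (m + 1)) 1 c * _) = _ at hcond
    have ih' := ih (c + 2)
    have h₁ := hodd c m
    have h₂ := hodd (c + 2) m
    have hlin : (Polynomial.X + Polynomial.C (c + (2 * m : ℕ) + 2 : ℚ)) =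
        Polynomial.X + Polynomial.C (c + 1 + 2 * m + 1 : ℚ) := by
      congr 2
      push_cast
      ring
    have hT : (LaurentPolynomial.T ((m ^ 2 : ℕ) : ℤ) ^ 2 * LaurentPolynomial.T (-(m * (m - 1) : ℤ)) *
        LaurentPolynomial.T (-((m + 1 : ℕ) * ((m + 1 : ℕ) - 1) : ℤ)) : RQ) = 1 := by
      rw [LaurentPolynomial.T_pow, ← LaurentPolynomial.T_add, ← LaurentPolynomial.T_add,
        ← LaurentPolynomial.T_zero]
      congr 1
      push_cast
      ring
    have hsq := congrArg (fun r : ℚ => (LaurentPolynomial.C (Polynomial.C r) : RQ))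
      (factProd_two_mul_sq m)
    have hdd : dd (2 * m) 1 (c + 2) ≠ 0 := by
      have hne (a : ℚ) : Polynomial.toLaurent (shiftX a (F m)) ≠ 0 :=
        Polynomial.toLaurent_ne_zero.mpr (shiftX_ne_zero a (hF m))
      rw [ih']
      refine mul_ne_zero (mul_ne_zero ?_ ?_) (mul_ne_zero (hne _) (hne _))
      · exact (LaurentPolynomial.isUnit_T _).ne_zero
      · exact LaurentPolynomial.C_ne_zero_of_ne_zero (mul_ne_zero
          (Polynomial.C_ne_zero.mpr (factProd_ne_zero _)) (linProd_ne_zero _ _))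
    have ht : (LaurentPolynomial.T ((m ^ 2 : ℕ) : ℤ) : RQ) ≠ 0 :=
      (LaurentPolynomial.isUnit_T _).ne_zero
    have hm' : (LaurentPolynomial.C (Polynomial.C (2 * m + 1 : ℚ)) : RQ) = 2 * m + 1 := by
      simp only [map_add, map_mul, map_ofNat, map_natCast, map_one]
    have hm : (2 * m + 1 : RQ) ≠ 0 := by
      rw [← hm']
      exact LaurentPolynomial.C_ne_zero_of_ne_zero (Polynomial.C_ne_zero.mpr (by positivity))
    apply mul_left_cancel₀ (mul_ne_zero (mul_ne_zero hm (pow_ne_zero 2 ht)) hdd)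
    rw [linProd_succ]
    rw [hlin] at hcond
    rw [show 2 * (m + 1) - 1 = 2 * m + 1 by omega]
    simp only [map_mul, map_pow, hm', Int.cast_add, Int.cast_ofNat] at h₁ h₂ ih' hsq ⊢
    generalize dd (2 * (m + 1)) 1 c = D at *
    generalize dd (2 * m) 1 (c + 2) = D₀ at *
    generalize dd (2 * m + 1) 1 c = O₁ at *
    generalize dd (2 * m + 1) 1 (c + 2) = O₂ at *
    generalize (LaurentPolynomial.T ((m ^ 2 : ℕ) : ℤ) : RQ) = t₀ at *
    generalize (LaurentPolynomial.T (-(m * (m - 1) : ℤ)) : RQ) = t at *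
    generalize (LaurentPolynomial.T (-((m + 1 : ℕ) * ((m + 1 : ℕ) - 1) : ℤ)) : RQ) = t' at *
    generalize (LaurentPolynomial.C (Polynomial.X + Polynomial.C (c + 1 + 2 * m + 1 : ℚ)) : RQ) = y
      at *
    generalize (LaurentPolynomial.C (linProd m (c + 1)) : RQ) = P at *
    generalize (LaurentPolynomial.C (linProd m (c + 2 + 1)) : RQ) = P' at *
    generalize Polynomial.toLaurent (shiftX c (F (m + 1))) = A at *
    generalize Polynomial.toLaurent (shiftX (c + 2) (F (m + 1))) = A' at *
    generalize Polynomial.toLaurent (shiftX (c + 2) (F m)) = B at *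
    generalize Polynomial.toLaurent (shiftX (c + 2 + 2) (F m)) = B' at *
    calc (2 * m + 1) * t₀ ^ 2 * D₀ * D = y * (t₀ * O₁) * (t₀ * O₂) := by
          linear_combination t₀ ^ 2 * hcond
      _ = _ := by
          rw [h₁, h₂, ih']
          linear_combination (y * P * P' * A * A' * B * B') * hsq -
            (y * P * P' * A * A' * B * B') * (2 * m + 1) *
              LaurentPolynomial.C (Polynomial.C (factProd (2 * m + 1))) *
              LaurentPolynomial.C (Polynomial.C (factProd (2 * m - 1))) * hT

theorem pPoly_eq (n : ℕ) (k : ℤ) : pPoly n k =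
    Polynomial.C (factProd (n - 1)) * linProd ((n - k.natAbs + 1) / 2) k.natAbs :=
  rfl

theorem sum_range_add_one_div_two (m : ℕ) :
    ∑ i ∈ Finset.range (2 * m), (i + 1) / 2 = m ^ 2 := by
  induction m with
  | zero => rfl
  | succ m ih =>
    rw [mul_add_one, Finset.sum_range_succ, Finset.sum_range_succ, ih,
      show (2 * m + 1) / 2 = m by omega, show (2 * m + 1 + 1) / 2 = m + 1 by omega]
    ring

theorem cExp_two_mul_zero (m : ℕ) : cExp (2 * m) 0 = -((m ^ 2 : ℕ) : ℤ) := by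
  rw [cExp, if_neg (by omega), if_neg (by omega), ← sum_range_add_one_div_two, sub_zero,
    Int.toNat_natCast]

theorem cExp_two_mul_add_one_one (m : ℕ) : cExp (2 * m + 1) 1 = -((m ^ 2 : ℕ) : ℤ) := by
  unfold cExp
  split_ifs with h h'
  · obtain rfl : m = 0 := by omega
    rfl
  · omega
  · rw [← sum_range_add_one_div_two, show ((2 * m + 1 : ℕ) - 1 : ℤ).toNat = 2 * m by omega]

theorem cExp_two_mul_add_two_one (m : ℕ) :
    cExp (2 * (m + 1)) 1 = -((m + 1 : ℕ) * ((m + 1 : ℕ) - 1) : ℤ) := by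
  rw [cExp, if_neg (by omega), if_neg (by omega),
    show ((2 * (m + 1) : ℕ) - 1 : ℤ).toNat = 2 * m + 1 by omega, Finset.sum_range_succ,
    sum_range_add_one_div_two, show (2 * m + 1) / 2 = m by omega]
  push_cast
  ring

/-- The sequence `F` exists, with all shifts of the two families of identities. -/
theorem exists_seq_isEvenRoot : ∃ F : ℕ → ℚ[X][X], F 0 = 1 ∧ (∀ m, IsEvenRoot m (F m)) ∧
    ∀ (m : ℕ) (c : ℤ), oddDet m c =
      Polynomial.C (Polynomial.C (factProd (2 * m)) * linProd m (c + 1)) *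
        (shiftX c (F (m + 1)) * shiftX (c + 2) (F m)) := by
  choose! g hg using fun m f => IsEvenRoot.exists_succ (m := m) (f := f)
  let F : ℕ → ℚ[X][X] := fun m => Nat.rec 1 g m
  have hF (m : ℕ) : IsEvenRoot m (F m) := by
    induction m with
    | zero => exact isEvenRoot_zero
    | succ m ih => exact (hg m (F m) ih).1
  exact ⟨F, rfl, hF, fun m => (hg m (F m) (hF m)).2⟩

/-- there are polynomials F_m(x,q) ∈ ℚ[x,q], F_0 = 1, with
d_{2n,0}(x,q) = (-1)^n·q^{c(2n,0)}·p_{2n,0}(x)·F_n(x+1,q)² and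
d_{n,1}(x,q) = q^{c(n,1)}·p_{n,1}(x)·F_{⌊(n+1)/2⌋}(x,q)·F_{⌊n/2⌋}(x+2,q) for all n ≥ 1. -/
theorem statement8 :
    ∃ F : ℕ → Polynomial (Polynomial ℚ), F 0 = 1 ∧
      ∀ n : ℕ, 1 ≤ n →
        (dd (2 * n) 0 0 = (-1) ^ n * LaurentPolynomial.T (cExp (2 * n) 0) *
            LaurentPolynomial.C (pPoly (2 * n) 0) *
            (Polynomial.toLaurent (shiftX 1 (F n))) ^ 2) ∧
        (dd n 1 0 = LaurentPolynomial.T (cExp n 1) * LaurentPolynomial.C (pPoly n 1) *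
            Polynomial.toLaurent (F ((n + 1) / 2)) *
            Polynomial.toLaurent (shiftX 2 (F (n / 2)))) := by
  obtain ⟨F, h0, hE, hO⟩ := exists_seq_isEvenRoot
  have hinv (m : ℕ) : (LaurentPolynomial.T (-((m ^ 2 : ℕ) : ℤ)) : RQ) *
      LaurentPolynomial.T ((m ^ 2 : ℕ) : ℤ) = 1 := by
    rw [← LaurentPolynomial.T_add, neg_add_cancel, LaurentPolynomial.T_zero]
  refine ⟨F, h0, fun n hn => ⟨?_, ?_⟩⟩
  · have h := congrArg Polynomial.toLaurent (hE n 0)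
    have hs : ((-1 : RQ) ^ n) ^ 2 = 1 := by
      rw [← pow_mul, mul_comm, pow_mul, show (-1 : RQ) ^ 2 = 1 by ring, one_pow]
    rw [toLaurent_evenDet, map_mul Polynomial.toLaurent, map_pow, Polynomial.toLaurent_C,
      Int.cast_zero, zero_add] at h
    rw [cExp_two_mul_zero, pPoly_eq, Int.natAbs_zero, Nat.cast_zero,
      show (2 * n - 0 + 1) / 2 = n by omega]
    have hT := hinv n
    generalize (LaurentPolynomial.T (-((n ^ 2 : ℕ) : ℤ)) : RQ) = t at *
    linear_combination (-1) ^ n * t * h - dd (2 * n) 0 0 * hT -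
      t * LaurentPolynomial.T ((n ^ 2 : ℕ) : ℤ) * dd (2 * n) 0 0 * hs
  · rcases Nat.even_or_odd' n with ⟨m, rfl | rfl⟩
    · obtain ⟨m, rfl⟩ : ∃ k, m = k + 1 := ⟨m - 1, by omega⟩
      have h := dd_one_two_mul_eq h0 (fun m => (hE m).ne_zero) hO (m + 1) 0
      rw [Int.cast_zero, zero_add, zero_add, shiftX_zero] at h
      rw [cExp_two_mul_add_two_one, pPoly_eq, Int.natAbs_one, Nat.cast_one,
        show (2 * (m + 1) - 1 + 1) / 2 = m + 1 by omega, show (2 * (m + 1) + 1) / 2 = m + 1 by omega,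
        show 2 * (m + 1) / 2 = m + 1 by omega, h, mul_assoc _ (Polynomial.toLaurent _)]
    · have h := congrArg Polynomial.toLaurent (hO m 0)
      rw [toLaurent_oddDet, map_mul Polynomial.toLaurent, map_mul Polynomial.toLaurent (shiftX _ _),
        Polynomial.toLaurent_C, Int.cast_zero, zero_add, zero_add, shiftX_zero] at h
      rw [cExp_two_mul_add_one_one, pPoly_eq, Int.natAbs_one, Nat.cast_one,
        show (2 * m + 1 - 1 + 1) / 2 = m by omega, show (2 * m + 1 + 1) / 2 = m + 1 by omega,
        show (2 * m + 1) / 2 = m by omega, Nat.add_sub_cancel]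
      linear_combination LaurentPolynomial.T (-((m ^ 2 : ℕ) : ℤ)) * h - dd (2 * m + 1) 1 0 * hinv m

end
end

section
/- There exists a sequence of polynomials P_m(Q) ∈ ℚ[Q] (m ≥ 2) such that for every positive integer n the Q-enumeration polynomials of alternating sign matrices satisfy A_{2n}(Q) = 2·P_{2n}(Q)·P_{2n+1}(Q) and A_{2n+1}(Q) = P_{2n+1}(Q)·P_{2n+2}(Q), as identities of polynomials in Q. In particular, each A_n(Q) is a product of two polynomials in Q with rational coefficients. -/
open Finset

noncomputable section

/-- A matrix is an alternating sign matrix: entries in {-1,0,1}, all row and column sums 1,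
and all partial row and column sums (from the start) equal to 0 or 1. -/
def IsASM {n : ℕ} (A : Matrix (Fin n) (Fin n) ℤ) : Prop :=
  (∀ i j, A i j = -1 ∨ A i j = 0 ∨ A i j = 1) ∧
  (∀ i, ∑ j, A i j = 1) ∧
  (∀ j, ∑ i, A i j = 1) ∧
  (∀ i j, (∑ j' ∈ Finset.Iic j, A i j') = 0 ∨ (∑ j' ∈ Finset.Iic j, A i j') = 1) ∧
  (∀ i j, (∑ i' ∈ Finset.Iic i, A i' j) = 0 ∨ (∑ i' ∈ Finset.Iic i, A i' j) = 1)

open scoped Classical in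
/-- The (finite) set of all alternating sign matrices of size n; since every ASM has entries
in {-1,0,1}, it occurs in the image below. -/
noncomputable def asmFinset (n : ℕ) : Finset (Matrix (Fin n) (Fin n) ℤ) :=
  ((Finset.univ : Finset (Matrix (Fin n) (Fin n) (Fin 3))).image
    (fun B => Matrix.of fun i j => ((B i j : ℕ) : ℤ) - 1)).filter (fun A => IsASM A)

/-- μ(A): the number of entries of A equal to -1. -/
def asmMu {n : ℕ} (A : Matrix (Fin n) (Fin n) ℤ) : ℕ :=
  (Finset.univ.filter (fun p : Fin n × Fin n => A p.1 p.2 = -1)).card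

/-- The Q-enumeration A_n(Q) = ∑_A Q^{μ(A)} of alternating sign matrices of size n. -/
noncomputable def asmEnum {S : Type*} [CommRing S] (n : ℕ) (Q : S) : S :=
  ∑ A ∈ asmFinset n, Q ^ asmMu A

/-- The Q-enumeration of ASMs of size n as a polynomial in Q over ℚ. -/
noncomputable def asmPoly (n : ℕ) : Polynomial ℚ :=
  ∑ A ∈ asmFinset n, (Polynomial.X : Polynomial ℚ) ^ asmMu A

namespace SixVertex

variable {R : Type*} [CommRing R]

/-- The six-vertex weight of a vertex whose horizontal and vertical edges agree. -/
def wtA (ρ x y : R) : R := 1 - (1 - ρ ^ 2) * (x * y) + ρ * (x + y)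

/-- The six-vertex weight of a vertex whose horizontal and vertical edges differ. -/
def wtB (ρ x y : R) : R := 1 - (1 - ρ ^ 2) * (x * y) - ρ * (x + y)

/-- The six-vertex weight of an entry `-1`; an entry `1` has weight `1`. -/
def wtC (ρ x y : R) : R := 4 * ρ ^ 2 * (1 + (1 - ρ ^ 2) * x ^ 2) * (1 + (1 - ρ ^ 2) * y ^ 2)

/-- The vertex weights as a matrix in the horizontal states, for given states of the vertical edges
above and below. -/
def vertex (ρ x y : R) : Bool → Bool → Matrix Bool Bool R
  | false, false => Matrix.diagonal fun h => bif h then wtB ρ x y else wtA ρ x y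
  | true, true => Matrix.diagonal fun h => bif h then wtA ρ x y else wtB ρ x y
  | false, true => Matrix.single false true 1
  | true, false => Matrix.single true false (wtC ρ x y)

/-- The product of the vertices of one row, as a matrix in the horizontal boundary states. -/
def rowWeight (ρ x : R) : {n : ℕ} → (Fin n → R) → (Fin n → Bool) → (Fin n → Bool) →
    Matrix Bool Bool R
  | 0, _, _, _ => 1
  | _ + 1, y, s, t =>
    vertex ρ x (y 0) (s 0) (t 0) * rowWeight ρ x (Fin.tail y) (Fin.tail s) (Fin.tail t)

/-- The row-to-row transfer matrix with domain wall horizontal boundary. -/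
def transfer (ρ : R) {n : ℕ} (y : Fin n → R) (x : R) :
    Matrix (Fin n → Bool) (Fin n → Bool) R :=
  Matrix.of fun s t => rowWeight ρ x y s t false true

/-- The domain wall partition function with row parameters `xs` and column parameters `y`. -/
def partitionFn (ρ : R) {n : ℕ} (y : Fin n → R) (xs : List R) : R :=
  (xs.map (transfer ρ y)).prod (fun _ => false) (fun _ => true)

/-- The diagonal entry of the R-matrix on equal states. -/
def rWeight (ρ x z : R) : R := 2 * ρ * (1 + (1 - ρ ^ 2) * (x * z)) + (1 - 2 * ρ ^ 2) * (x - z)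

/-- The R-matrix intertwining two rows. -/
def rMatrix (ρ x x' : R) : Matrix (Bool × Bool) (Bool × Bool) R := Matrix.of fun g h =>
  match g, h with
  | (false, false), (false, false) => rWeight ρ x x'
  | (true, true), (true, true) => rWeight ρ x x'
  | (false, true), (false, true) => 2 * ρ * (1 + (1 - ρ ^ 2) * x ^ 2)
  | (true, false), (true, false) => 2 * ρ * (1 + (1 - ρ ^ 2) * x' ^ 2)
  | (false, true), (true, false) => x - x'
  | (true, false), (false, true) => x - x'
  | _, _ => 0

open scoped Kronecker

set_option maxHeartbeats 2000000 in
theorem yang_baxter (ρ x x' y : R) (s u : Bool) :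
    rMatrix ρ x x' * ∑ t, vertex ρ x y s t ⊗ₖ vertex ρ x' y t u =
      (∑ t, vertex ρ x' y s t ⊗ₖ vertex ρ x y t u) * rMatrix ρ x x' := by
  ext ⟨g, g'⟩ ⟨h, h'⟩
  cases s <;> cases u <;> cases g <;> cases g' <;> cases h <;> cases h' <;>
    simp [rMatrix, vertex, Matrix.mul_apply, Fintype.sum_prod_type, Matrix.kroneckerMap_apply,
      wtA, wtB, wtC, rWeight, Matrix.add_apply] <;> try ring

theorem sum_bool_cons {M : Type*} [AddCommMonoid M] {n : ℕ} (f : (Fin (n + 1) → Bool) → M) :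
    ∑ s, f s = ∑ b, ∑ s, f (Fin.cons b s) := by
  rw [← Fintype.sum_prod_type' (f := fun b s => f (Fin.cons b s))]
  exact ((Fin.consEquiv fun _ => Bool).sum_comp f).symm

theorem sum_rowWeight_kronecker_succ (ρ x x' : R) {n : ℕ} (y : Fin (n + 1) → R)
    (s u : Fin (n + 1) → Bool) :
    ∑ t, rowWeight ρ x y s t ⊗ₖ rowWeight ρ x' y t u =
      (∑ t, vertex ρ x (y 0) (s 0) t ⊗ₖ vertex ρ x' (y 0) t (u 0)) *
      ∑ t, rowWeight ρ x (Fin.tail y) (Fin.tail s) t ⊗ₖ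
        rowWeight ρ x' (Fin.tail y) t (Fin.tail u) := by
  rw [sum_bool_cons, Finset.sum_mul]
  refine Finset.sum_congr rfl fun b _ => ?_
  rw [Finset.mul_sum]
  refine Finset.sum_congr rfl fun t _ => ?_
  simp only [rowWeight, Matrix.mul_kronecker_mul, Fin.cons_zero, Fin.tail_cons]

theorem rMatrix_mul_sum_rowWeight (ρ x x' : R) {n : ℕ} (y : Fin n → R) (s u : Fin n → Bool) :
    rMatrix ρ x x' * ∑ t, rowWeight ρ x y s t ⊗ₖ rowWeight ρ x' y t u =
      (∑ t, rowWeight ρ x' y s t ⊗ₖ rowWeight ρ x y t u) * rMatrix ρ x x' := by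
  induction n with
  | zero => simp [rowWeight]
  | succ n ih =>
    rw [sum_rowWeight_kronecker_succ, sum_rowWeight_kronecker_succ, ← mul_assoc, yang_baxter,
      mul_assoc, ih, mul_assoc]

theorem transfer_mul_transfer_apply (ρ x x' : R) {n : ℕ} (y : Fin n → R) (s u : Fin n → Bool) :
    (transfer ρ y x * transfer ρ y x') s u =
      (∑ t, rowWeight ρ x y s t ⊗ₖ rowWeight ρ x' y t u) (false, false) (true, true) := by
  simp [Matrix.mul_apply, transfer, Matrix.sum_apply]

theorem transfer_commute [IsDomain R] (ρ x x' : R) (h : rWeight ρ x x' ≠ 0) {n : ℕ}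
    (y : Fin n → R) : Commute (transfer ρ y x) (transfer ρ y x') := by
  ext s u
  rw [transfer_mul_transfer_apply, transfer_mul_transfer_apply]
  have := congrFun (congrFun (rMatrix_mul_sum_rowWeight ρ x x' y s u) (false, false)) (true, true)
  rw [Matrix.mul_apply, Matrix.mul_apply] at this
  simp only [Fintype.sum_prod_type, Fintype.sum_bool] at this
  simp only [rMatrix, Matrix.of_apply, zero_mul, mul_zero, zero_add, add_zero] at this
  rw [mul_comm] at this
  exact mul_right_cancel₀ h this

theorem partitionFn_perm [IsDomain R] (ρ : R) {n : ℕ} (y : Fin n → R) {xs xs' : List R}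
    (hp : xs.Perm xs') (h : xs.Pairwise fun x x' => rWeight ρ x x' ≠ 0) :
    partitionFn ρ y xs = partitionFn ρ y xs' := by
  unfold partitionFn
  rw [(hp.map (transfer ρ y)).prod_eq']
  exact List.pairwise_map.mpr (h.imp fun hx => transfer_commute ρ _ _ hx y)

theorem rowWeight_false_true_true (ρ x : R) {n : ℕ} (y : Fin n → R) (t : Fin n → Bool) :
    rowWeight ρ x y (fun _ => false) t true true =
      if t = fun _ => false then ∏ j, wtB ρ x (y j) else 0 := by
  induction n with
  | zero => simp [rowWeight, Subsingleton.elim t fun _ => false]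
  | succ n ih =>
    have h2 : Fin.tail (fun _ : Fin (n + 1) => false) = fun _ => false := rfl
    obtain ⟨b, t, rfl⟩ : ∃ b t', t = Fin.cons b t' := ⟨t 0, Fin.tail t, (Fin.cons_self_tail t).symm⟩
    have h3 : (Fin.cons b t = fun _ : Fin (n + 1) => false) ↔ b = false ∧ t = fun _ => false := by
      constructor
      · intro h
        exact ⟨congrFun h 0, funext fun j => by simpa using congrFun h j.succ⟩
      · rintro ⟨rfl, rfl⟩
        ext j; cases j using Fin.cases <;> simp
    simp only [rowWeight, Matrix.mul_apply, Fintype.sum_bool, h2, Fin.tail_cons, Fin.cons_zero, h3,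
      ih]
    cases b <;> simp [vertex, Fin.prod_univ_succ, Fin.tail]

theorem transfer_false_of_wtA_eq_zero (ρ x : R) {n : ℕ} (y : Fin (n + 1) → R)
    (h : wtA ρ x (y 0) = 0) (b : Bool) (t : Fin n → Bool) :
    transfer ρ y x (fun _ => false) (Fin.cons b t) =
      if b = true ∧ t = fun _ => false then ∏ j : Fin n, wtB ρ x (y j.succ) else 0 := by
  have h2 : Fin.tail (fun _ : Fin (n + 1) => false) = fun _ => false := rfl
  simp only [transfer, Matrix.of_apply, rowWeight, Matrix.mul_apply, Fintype.sum_bool, h2,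
    Fin.tail_cons, Fin.cons_zero, rowWeight_false_true_true]
  cases b <;> simp [vertex, h, Fin.tail]

theorem transfer_cons_true (ρ x : R) {n : ℕ} (y : Fin (n + 1) → R)
    (b : Bool) (s t : Fin n → Bool) :
    transfer ρ y x (Fin.cons true s) (Fin.cons b t) =
      if b = true then wtB ρ x (y 0) * transfer ρ (Fin.tail y) x s t else 0 := by
  simp only [transfer, Matrix.of_apply, rowWeight, Matrix.mul_apply, Fintype.sum_bool,
    Fin.tail_cons, Fin.cons_zero]
  cases b <;> simp [vertex]

theorem prod_transfer_cons_true (ρ : R) {n : ℕ} (y : Fin (n + 1) → R) (xs : List R)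
    (s t : Fin n → Bool) :
    (xs.map (transfer ρ y)).prod (Fin.cons true s) (Fin.cons true t) =
      (xs.map fun x => wtB ρ x (y 0)).prod * (xs.map (transfer ρ (Fin.tail y))).prod s t := by
  induction xs generalizing s with
  | nil => simp [Matrix.one_apply, Fin.cons_inj]
  | cons x xs ih =>
    simp only [List.map_cons, List.prod_cons, Matrix.mul_apply, sum_bool_cons,
      transfer_cons_true, ih, Fintype.sum_bool, Finset.mul_sum]
    simp
    exact Finset.sum_congr rfl fun u _ => by ring

theorem partitionFn_cons_of_wtA_eq_zero (ρ x : R) {n : ℕ} (y : Fin (n + 1) → R) (xs : List R)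
    (h : wtA ρ x (y 0) = 0) :
    partitionFn ρ y (x :: xs) = (∏ j : Fin n, wtB ρ x (y j.succ)) *
      (xs.map fun x => wtB ρ x (y 0)).prod * partitionFn ρ (Fin.tail y) xs := by
  have h1 : (fun _ => true : Fin (n + 1) → Bool) = Fin.cons true fun _ => true := by
    ext j; cases j using Fin.cases <;> simp
  unfold partitionFn
  simp only [List.map_cons, List.prod_cons, Matrix.mul_apply, sum_bool_cons, Fintype.sum_bool,
    transfer_false_of_wtA_eq_zero _ _ _ h, h1]
  simp [prod_transfer_cons_true, mul_assoc]

theorem vertex_map {S : Type*} [CommRing S] (f : R →+* S) (ρ x y : R) (s t : Bool) :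
    vertex (f ρ) (f x) (f y) s t = (vertex ρ x y s t).map f := by
  ext g h
  cases s <;> cases t <;> cases g <;> cases h <;> simp [vertex, wtA, wtB, wtC, map_ofNat f 4]

theorem rowWeight_map {S : Type*} [CommRing S] (f : R →+* S) (ρ x : R) {n : ℕ} (y : Fin n → R)
    (s t : Fin n → Bool) :
    rowWeight (f ρ) (f x) (f ∘ y) s t = (rowWeight ρ x y s t).map f := by
  induction n with
  | zero => simp [rowWeight]
  | succ n ih =>
    simp only [rowWeight, Matrix.map_mul, Function.comp_apply, vertex_map]
    rw [← ih]; rfl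

theorem transfer_map {S : Type*} [CommRing S] (f : R →+* S) (ρ x : R) {n : ℕ} (y : Fin n → R) :
    transfer (f ρ) (f ∘ y) (f x) = f.mapMatrix (transfer ρ y x) := by
  ext s t
  simp [transfer, rowWeight_map]

theorem partitionFn_map {S : Type*} [CommRing S] (f : R →+* S) (ρ : R) {n : ℕ} (y : Fin n → R)
    (xs : List R) :
    partitionFn (f ρ) (f ∘ y) (xs.map f) = f (partitionFn ρ y xs) := by
  have : ((xs.map f).map (transfer (f ρ) (f ∘ y))) = (xs.map (transfer ρ y)).map f.mapMatrix := by
    simp [transfer_map]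
  rw [partitionFn, this, ← map_list_prod]
  rfl

/-- The polynomial `p` has degree at most `d`, where a negative `d` forces `p = 0`. -/
def DegreeBound (p : Polynomial R) (d : ℤ) : Prop := ∀ k : ℕ, d < k → p.coeff k = 0

namespace DegreeBound
open Polynomial

variable {p q : R[X]} {d e : ℤ}

theorem mono (hp : DegreeBound p d) (h : d ≤ e) : DegreeBound p e :=
  fun k hk => hp k (h.trans_lt hk)

theorem zero : DegreeBound (0 : R[X]) d := fun _ _ => coeff_zero _

theorem C (r : R) : DegreeBound (C r) 0 := fun k hk => coeff_C_of_ne_zero (by omega)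

theorem one : DegreeBound (1 : R[X]) 0 := by simpa using C (1 : R)

theorem X : DegreeBound (X : R[X]) 1 := fun k hk => coeff_X_of_ne_one (by omega)

theorem add (hp : DegreeBound p d) (hq : DegreeBound q d) : DegreeBound (p + q) d :=
  fun k hk => by rw [coeff_add, hp k hk, hq k hk, add_zero]

theorem sub (hp : DegreeBound p d) (hq : DegreeBound q d) : DegreeBound (p - q) d :=
  fun k hk => by rw [coeff_sub, hp k hk, hq k hk, sub_zero]

theorem mul (hp : DegreeBound p d) (hq : DegreeBound q e) : DegreeBound (p * q) (d + e) := by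
  intro k hk
  rw [coeff_mul]
  refine Finset.sum_eq_zero fun ⟨i, j⟩ hij => ?_
  rw [HasAntidiagonal.mem_antidiagonal] at hij
  by_cases hi : d < i
  · simp [hp i hi]
  · simp [hq j (by simp only at hij; omega)]

theorem sum {ι : Type*} {s : Finset ι} {f : ι → R[X]} (h : ∀ i ∈ s, DegreeBound (f i) d) :
    DegreeBound (∑ i ∈ s, f i) d := fun k hk => by
  rw [finsetSum_coeff]
  exact Finset.sum_eq_zero fun i hi => h i hi k hk

theorem prod {ι : Type*} {s : Finset ι} {f : ι → R[X]} {g : ι → ℤ}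
    (h : ∀ i ∈ s, DegreeBound (f i) (g i)) : DegreeBound (∏ i ∈ s, f i) (∑ i ∈ s, g i) := by
  classical
  induction s using Finset.induction_on with
  | empty => simpa using one
  | insert a s ha ih =>
    rw [Finset.prod_insert ha, Finset.sum_insert ha]
    exact (h a (by simp)).mul (ih fun i hi => h i (by simp [hi]))

theorem natDegree_le {n : ℕ} (hp : DegreeBound p n) : p.natDegree ≤ n :=
  natDegree_le_iff_coeff_eq_zero.mpr fun k hk => hp k (by exact_mod_cast hk)

end DegreeBound

open Polynomial in
theorem wtA_degreeBound (ρ x : R) : DegreeBound (wtA (C ρ) (C x) X) 1 := by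
  have : wtA (C ρ) (C x) X = C (ρ - (1 - ρ ^ 2) * x) * X + C (1 + ρ * x) := by
    simp only [wtA, map_sub, map_mul, map_add, map_one, map_pow]; ring
  rw [this]
  exact ((DegreeBound.C _).mul DegreeBound.X).add ((DegreeBound.C _).mono (by norm_num))

open Polynomial in
theorem wtB_degreeBound (ρ x : R) : DegreeBound (wtB (C ρ) (C x) X) 1 := by
  have : wtB (C ρ) (C x) X = C (-ρ - (1 - ρ ^ 2) * x) * X + C (1 - ρ * x) := by
    simp only [wtB, map_sub, map_mul, map_neg, map_one, map_pow]; ring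
  rw [this]
  exact ((DegreeBound.C _).mul DegreeBound.X).add ((DegreeBound.C _).mono (by norm_num))

open Polynomial in
theorem wtC_degreeBound (ρ x : R) : DegreeBound (wtC (C ρ) (C x) X) 2 := by
  have : wtC (C ρ) (C x) X = C (4 * ρ ^ 2 * (1 + (1 - ρ ^ 2) * x ^ 2) * (1 - ρ ^ 2)) * (X * X) +
      C (4 * ρ ^ 2 * (1 + (1 - ρ ^ 2) * x ^ 2)) := by
    simp only [wtC, map_sub, map_mul, map_add, map_one, map_pow, map_ofNat]; ring
  rw [this]
  exact ((DegreeBound.C _).mul (DegreeBound.X.mul DegreeBound.X)).add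
    ((DegreeBound.C _).mono (by norm_num))

open Polynomial in
theorem vertex_degreeBound (ρ x : R) (s t g h : Bool) :
    DegreeBound (vertex (C ρ) (C x) X s t g h) (1 + s.toNat - t.toNat) := by
  cases s <;> cases t <;> cases g <;> cases h <;>
    simp [vertex, DegreeBound.zero, wtA_degreeBound, wtB_degreeBound, DegreeBound.one,
      one_add_one_eq_two, wtC_degreeBound]

open Polynomial in
theorem transfer_degreeBound (ρ x : R) {n : ℕ} (y : Fin n → R) (s t : Fin (n + 1) → Bool) :
    DegreeBound (transfer (C ρ) (Fin.cons X (C ∘ y) : Fin (n + 1) → R[X]) (C x) s t)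
      (1 + (s 0).toNat - (t 0).toNat) := by
  simp only [transfer, Matrix.of_apply, rowWeight, Matrix.mul_apply, Fin.cons_zero, Fin.tail_cons,
    rowWeight_map, Matrix.map_apply]
  exact DegreeBound.sum fun g _ => by
    simpa using (vertex_degreeBound ρ x (s 0) (t 0) false g).mul (DegreeBound.C _)

open Polynomial in
theorem prod_transfer_degreeBound (ρ : R) {n : ℕ} (y : Fin n → R) (xs : List R)
    (s t : Fin (n + 1) → Bool) :
    DegreeBound
      (((xs.map C).map (transfer (C ρ) (Fin.cons X (C ∘ y) : Fin (n + 1) → R[X]))).prod s t)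
      (xs.length + (s 0).toNat - (t 0).toNat) := by
  induction xs generalizing s with
  | nil =>
    rw [List.map_nil, List.map_nil, List.prod_nil, Matrix.one_apply]
    split_ifs with h
    · subst h; simpa using DegreeBound.one
    · exact DegreeBound.zero
  | cons x xs ih =>
    simp only [List.map_cons, List.prod_cons, Matrix.mul_apply]
    refine DegreeBound.sum fun u _ =>
      ((transfer_degreeBound ρ x y s u).mul (ih u)).mono ?_
    push_cast [List.length_cons]; linarith

/-- The product of the two weights without a turn. -/
def wtAB (ρ x y : R) : R := wtA ρ x y * wtB ρ x y

/-- The Izergin–Korepin matrix with entries `1 / wtAB`, each column cleared of denominators. -/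
def clearedMatrix (ρ : R) {n : ℕ} (x y : Fin n → R) : Matrix (Fin n) (Fin n) R :=
  Matrix.of fun i j => ∏ k, if k = i then 1 else wtAB ρ (x k) (y j)

theorem clearedMatrix_map {S : Type*} [CommRing S] (f : R →+* S) (ρ : R) {n : ℕ}
    (x y : Fin n → R) :
    clearedMatrix (f ρ) (f ∘ x) (f ∘ y) = f.mapMatrix (clearedMatrix ρ x y) := by
  ext i j
  simp only [clearedMatrix, Matrix.of_apply, RingHom.mapMatrix_apply, Matrix.map_apply, map_prod]
  refine Finset.prod_congr rfl fun k _ => ?_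
  split_ifs <;> simp [wtAB, wtA, wtB]

theorem clearedMatrix_succAbove (ρ : R) {n : ℕ} (x y : Fin (n + 1) → R) (i : Fin (n + 1)) :
    ((clearedMatrix ρ x y).submatrix i.succAbove Fin.succ).det =
      (∏ j : Fin n, wtAB ρ (x i) (y j.succ)) *
        (clearedMatrix ρ (x ∘ i.succAbove) (Fin.tail y)).det := by
  rw [← Matrix.det_mul_row]
  congr 1
  ext a j
  simp only [clearedMatrix, Matrix.submatrix_apply, Matrix.of_apply, Fin.prod_univ_succAbove _ i,
    (Fin.succAbove_ne i a).symm, if_false, Fin.succAbove_right_inj, Function.comp_apply, Fin.tail]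

theorem clearedMatrix_apply_zero (ρ : R) {n : ℕ} (x y : Fin (n + 1) → R) (i j : Fin (n + 1)) :
    clearedMatrix ρ x y i j = ∏ k : Fin n, wtAB ρ (x (i.succAbove k)) (y j) := by
  simp [clearedMatrix, Fin.prod_univ_succAbove _ i, Fin.succAbove_ne]

theorem det_clearedMatrix_of_wtA_eq_zero (ρ : R) {n : ℕ} (x y : Fin (n + 1) → R) (i : Fin (n + 1))
    (h : wtA ρ (x i) (y 0) = 0) :
    (clearedMatrix ρ x y).det = (-1) ^ (i : ℕ) *
      (∏ k : Fin n, wtAB ρ (x (i.succAbove k)) (y 0)) * ((∏ j : Fin n, wtAB ρ (x i) (y j.succ)) *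
        (clearedMatrix ρ (x ∘ i.succAbove) (Fin.tail y)).det) := by
  rw [Matrix.det_succ_column_zero, Finset.sum_eq_single i]
  · rw [clearedMatrix_succAbove, clearedMatrix_apply_zero]
  · intro a _ ha
    have : clearedMatrix ρ x y a 0 = 0 := by
      simp only [clearedMatrix, Matrix.of_apply]
      exact Finset.prod_eq_zero (Finset.mem_univ i) (by simp [ha.symm, wtAB, h])
    simp [this]
  · simp

theorem det_vandermonde_cons {n : ℕ} (z : R) (y : Fin n → R) :
    (Matrix.vandermonde (Fin.cons z y : Fin (n + 1) → R)).det =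
      (∏ j, (y j - z)) * (Matrix.vandermonde y).det := by
  rw [Matrix.det_vandermonde, Matrix.det_vandermonde, Fin.prod_univ_succ, Fin.prod_Ioi_zero]
  simp [Fin.prod_Ioi_succ]

theorem det_vandermonde_succAbove {n : ℕ} (x : Fin (n + 1) → R) (i : Fin (n + 1)) :
    (Matrix.vandermonde x).det = (-1) ^ (i : ℕ) *
      ((∏ k, (x (i.succAbove k) - x i)) * (Matrix.vandermonde (x ∘ i.succAbove)).det) := by
  change _ = _ * ((∏ k, ((x ∘ i.succAbove) k - x i)) * _)
  rw [← det_vandermonde_cons]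
  have h : x = (Fin.cons (x i) (x ∘ i.succAbove) : Fin (n + 1) → R) ∘ i.cycleRange := by
    rw [Fin.cons_comp_cycleRange]
    ext j
    cases j using Fin.succAboveCases i <;> simp
  have h2 : Matrix.vandermonde x =
      (Matrix.vandermonde (Fin.cons (x i) (x ∘ i.succAbove) : Fin (n + 1) → R)).submatrix
        i.cycleRange id := by
    conv_lhs => rw [h]
    rfl
  rw [h2, Matrix.det_permute, Fin.sign_cycleRange]
  simp

theorem wtA_mul_wtA_of_eq_zero (ρ x x' y z : R) (h : wtA ρ x z = 0) :
    wtA ρ x' z * wtA ρ x y = (x' - x) * (y - z) := by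
  unfold wtA at *
  linear_combination (-(1 - ρ ^ 2) * (x' - x) * (y - z) + (y - z) * (ρ - (1 - ρ ^ 2) * x) +
    (x' - x) * (ρ - (1 - ρ ^ 2) * z) + (1 - (1 - ρ ^ 2) * (x * z) + ρ * (x + z))) * h

theorem ne_of_wtA_eq_zero [IsDomain R] {ρ x x' z z' : R} (hx : x ≠ x') (h : wtA ρ x z = 0)
    (h' : wtA ρ x' z' = 0) : z ≠ z' := by
  rintro rfl
  have h1 := wtA_mul_wtA_of_eq_zero ρ x x' (z + 1) z h
  rw [h'] at h1
  simp only [zero_mul, add_sub_cancel_left, mul_one] at h1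
  exact hx (sub_eq_zero.mp h1.symm).symm

theorem izergin_korepin_of_wtA_eq_zero [IsDomain R] (ρ : R) {n : ℕ} (x y : Fin (n + 1) → R)
    (i : Fin (n + 1)) (h : wtA ρ (x i) (y 0) = 0)
    (hr : ∀ i k, rWeight ρ (x i) (x k) ≠ 0)
    (ih : partitionFn ρ (Fin.tail y) (List.ofFn (x ∘ i.succAbove)) *
      ((Matrix.vandermonde (x ∘ i.succAbove)).det * (Matrix.vandermonde (Fin.tail y)).det) =
        (clearedMatrix ρ (x ∘ i.succAbove) (Fin.tail y)).det) :
    partitionFn ρ y (List.ofFn x) *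
      ((Matrix.vandermonde x).det * (Matrix.vandermonde y).det) = (clearedMatrix ρ x y).det := by
  have hperm : (List.ofFn x).Perm (x i :: List.ofFn (x ∘ i.succAbove)) := by
    have h1 : x = (Fin.cons (x i) (x ∘ i.succAbove) : Fin (n + 1) → R) ∘ i.cycleRange := by
      rw [Fin.cons_comp_cycleRange]
      ext j
      cases j using Fin.succAboveCases i <;> simp
    conv_lhs => rw [h1]
    refine (Equiv.Perm.ofFn_comp_perm _ _).trans ?_
    rw [List.ofFn_succ]
    simp only [Fin.cons_zero, Fin.cons_succ]
    exact List.Perm.refl _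
  rw [partitionFn_perm ρ y hperm (List.pairwise_ofFn.mpr fun _ _ _ => hr _ _),
    partitionFn_cons_of_wtA_eq_zero ρ _ y _ h, det_vandermonde_succAbove x i,
    det_clearedMatrix_of_wtA_eq_zero ρ x y i h, ← ih]
  have hy : (Matrix.vandermonde y).det =
      (∏ j : Fin n, (y j.succ - y 0)) * (Matrix.vandermonde (Fin.tail y)).det := by
    conv_lhs => rw [← Fin.cons_self_tail y, det_vandermonde_cons]
    rfl
  have hab : (∏ k : Fin n, wtA ρ (x (i.succAbove k)) (y 0)) * ∏ j : Fin n, wtA ρ (x i) (y j.succ) =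
      (∏ k, (x (i.succAbove k) - x i)) * ∏ j : Fin n, (y j.succ - y 0) := by
    rw [← Finset.prod_mul_distrib, ← Finset.prod_mul_distrib]
    exact Finset.prod_congr rfl fun k _ => wtA_mul_wtA_of_eq_zero _ _ _ _ _ h
  have hl : ((List.ofFn (x ∘ i.succAbove)).map fun x => wtB ρ x (y 0)).prod =
      ∏ k : Fin n, wtB ρ (x (i.succAbove k)) (y 0) := by
    rw [List.map_ofFn, List.prod_ofFn]; rfl
  rw [hy, hl]
  simp only [wtAB, Finset.prod_mul_distrib]
  linear_combination (-1) ^ (i : ℕ) * (-(∏ j : Fin n, wtB ρ (x i) (y j.succ)) *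
    (∏ k : Fin n, wtB ρ (x (i.succAbove k)) (y 0)) *
    partitionFn ρ (Fin.tail y) (List.ofFn (x ∘ i.succAbove)) *
      ((Matrix.vandermonde (x ∘ i.succAbove)).det * (Matrix.vandermonde (Fin.tail y)).det)) * hab

open Polynomial in
theorem det_clearedMatrix_degreeBound (ρ : R) {n : ℕ} (x : Fin (n + 1) → R) (y : Fin n → R) :
    DegreeBound (clearedMatrix (C ρ) (C ∘ x) (Fin.cons X (C ∘ y) : Fin (n + 1) → R[X])).det
      (n + n : ℕ) := by
  rw [Matrix.det_succ_column_zero]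
  refine DegreeBound.sum fun i _ => ?_
  rw [clearedMatrix_succAbove, clearedMatrix_apply_zero, Fin.tail_cons, Function.comp_assoc,
    clearedMatrix_map]
  have h1 : DegreeBound (∏ k : Fin n, wtAB (C ρ) ((C ∘ x) (i.succAbove k))
      ((Fin.cons X (C ∘ y) : Fin (n + 1) → R[X]) 0)) (∑ _k : Fin n, (1 + 1)) :=
    DegreeBound.prod fun k _ => (wtA_degreeBound ρ _).mul (wtB_degreeBound ρ _)
  have h2 : DegreeBound (∏ j : Fin n, wtAB (C ρ) ((C ∘ x) i)
      ((Fin.cons X (C ∘ y) : Fin (n + 1) → R[X]) j.succ)) (∑ _k : Fin n, 0) :=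
    DegreeBound.prod fun k _ => by
      have : wtAB (C ρ) ((C ∘ x) i) ((Fin.cons X (C ∘ y) : Fin (n + 1) → R[X]) k.succ) =
          C (wtAB ρ (x i) (y k)) := by simp [wtAB, wtA, wtB]
      rw [this]
      exact DegreeBound.C _
  have h3 : DegreeBound ((-1 : R[X]) ^ (i : ℕ)) 0 := by
    simpa using DegreeBound.C ((-1 : R) ^ (i : ℕ))
  rw [← RingHom.map_det]
  refine ((h3.mul h1).mul (h2.mul (DegreeBound.C _))).mono ?_
  simp; linarith

open Polynomial in
/-- The Izergin–Korepin determinant formula, cleared of denominators. -/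
theorem izergin_korepin [IsDomain R] (ρ : R) {n : ℕ} (x y : Fin n → R)
    (hx : Function.Injective x) (hy : Function.Injective y)
    (hz : ∀ i, ∃ z, wtA ρ (x i) z = 0) (hne : ∀ i j, wtA ρ (x i) (y j) ≠ 0)
    (hr : ∀ i k, rWeight ρ (x i) (x k) ≠ 0) :
    partitionFn ρ y (List.ofFn x) *
      ((Matrix.vandermonde x).det * (Matrix.vandermonde y).det) = (clearedMatrix ρ x y).det := by
  induction n with
  | zero => simp [partitionFn, Matrix.one_apply, eq_iff_true_of_subsingleton]
  | succ n ih =>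
    choose z hz using hz
    obtain ⟨y0, y, rfl⟩ : ∃ y0 y', y = Fin.cons y0 y' :=
      ⟨y 0, Fin.tail y, (Fin.cons_self_tail y).symm⟩
    obtain ⟨hy0, hy⟩ := Fin.cons_injective_iff.mp hy
    have hne' : ∀ i j, wtA ρ (x i) (y j) ≠ 0 := fun i j => by simpa using hne i j.succ
    set Y : Fin (n + 1) → R[X] := Fin.cons X (C ∘ y) with hY
    have hYe : ∀ t, ⇑(evalRingHom t) ∘ Y = Fin.cons t y := by
      intro t
      ext j
      cases j using Fin.cases <;> simp [hY]
    have hxe : ∀ t : R, ⇑(evalRingHom t) ∘ (C ∘ x) = x := by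
      intro t; ext j; simp
    set p : R[X] := partitionFn (C ρ) Y ((List.ofFn x).map C) *
      (C (Matrix.vandermonde x).det * ((∏ j, (C (y j) - X)) * C (Matrix.vandermonde y).det))
      with hp
    set q : R[X] := (clearedMatrix (C ρ) (C ∘ x) Y).det with hq
    have hpe : ∀ t, p.eval t = partitionFn ρ (Fin.cons t y) (List.ofFn x) *
        ((Matrix.vandermonde x).det *
          (Matrix.vandermonde (Fin.cons t y : Fin (n + 1) → R)).det) := by
      intro t
      have := partitionFn_map (evalRingHom t) (C ρ) Y ((List.ofFn x).map C)
      rw [hYe, List.map_map, coe_evalRingHom, eval_C] at this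
      have hid : (eval t ∘ C : R → R) = id := by ext; simp
      rw [hid, List.map_id] at this
      rw [det_vandermonde_cons, this, hp]
      simp [eval_prod]
    have hqe : ∀ t, q.eval t = (clearedMatrix ρ x (Fin.cons t y : Fin (n + 1) → R)).det := by
      intro t
      have := clearedMatrix_map (evalRingHom t) (C ρ) (C ∘ x) Y
      rw [hYe, hxe, coe_evalRingHom, eval_C] at this
      rw [this, ← RingHom.map_det]
      rfl
    have hpq : p - q = 0 := by
      refine eq_zero_of_natDegree_lt_card_of_eval_eq_zero (p - q) (f := Sum.elim y z) ?_ ?_ ?_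
      · refine hy.sumElim ?_ ?_
        · intro i k hik
          by_contra h
          exact ne_of_wtA_eq_zero (hx.ne h) (hz i) (hz k) hik
        · intro j i h
          exact hne' i j (h ▸ hz i)
      · rintro (j | i)
        · rw [eval_sub, hpe, hqe, Sum.elim_inl, det_vandermonde_cons,
            Finset.prod_eq_zero (Finset.mem_univ j) (sub_self _),
            Matrix.det_zero_of_column_eq (M := clearedMatrix ρ x _) (i := 0) (j := j.succ)
              (Fin.succ_ne_zero j).symm fun k => by simp [clearedMatrix]]
          simp
        · rw [eval_sub, hpe, hqe, Sum.elim_inr, sub_eq_zero]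
          refine izergin_korepin_of_wtA_eq_zero ρ x _ i (by simpa using hz i) hr ?_
          rw [Fin.tail_cons]
          exact ih _ _ (hx.comp Fin.succAbove_right_injective) hy (fun k => ⟨_, hz _⟩)
            (fun k j => hne' _ _) fun k l => hr _ _
      · have hd1 : DegreeBound p (n + n : ℕ) := by
          have h1 := prod_transfer_degreeBound ρ y (List.ofFn x) (fun _ => false) (fun _ => true)
          have h2 : DegreeBound (∏ j, (C (y j) - X)) (∑ _j : Fin n, 1) :=
            DegreeBound.prod fun j _ =>
              ((DegreeBound.C _).mono (by norm_num)).sub DegreeBound.X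
          refine (h1.mul ((DegreeBound.C _).mul (h2.mul (DegreeBound.C _)))).mono ?_
          simp
        have : (p - q).natDegree ≤ _ :=
          (hd1.sub (det_clearedMatrix_degreeBound ρ x y)).natDegree_le
        simp only [Fintype.card_sum, Fintype.card_fin]
        omega
    rw [← hpe, ← hqe, sub_eq_zero.mp hpq]

section Coefficients
open Polynomial

/-- The homogeneous components of `1 / wtAB` in the two spectral parameters, dehomogenized. -/
def kernelPoly (r : R) : ℕ → R[X]
  | 0 => 1
  | 1 => C r * X ^ 2 + 2 * X + C r
  | s + 2 => (C r * X ^ 2 + 2 * X + C r) * kernelPoly r (s + 1) -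
      C ((1 - r) ^ 2) * X ^ 2 * kernelPoly r s

/-- The Taylor coefficients of `1 / wtAB` at the origin. -/
def kernelCoeff (r : R) (p q : ℕ) : R :=
  if Even (p + q) then (kernelPoly r ((p + q) / 2)).coeff p else 0

theorem kernelPoly_map {S : Type*} [CommRing S] (f : R →+* S) (r : R) (s : ℕ) :
    kernelPoly (f r) s = (kernelPoly r s).map f := by
  induction s using Nat.twoStepInduction with
  | zero => simp [kernelPoly]
  | one => simp [kernelPoly]
  | more s h1 h2 => simp [kernelPoly, h1, h2]

theorem kernelCoeff_map {S : Type*} [CommRing S] (f : R →+* S) (r : R) (p q : ℕ) :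
    kernelCoeff (f r) p q = f (kernelCoeff r p q) := by
  unfold kernelCoeff
  split_ifs <;> simp [kernelPoly_map]

theorem kernelPoly_natDegree_le (r : R) (s : ℕ) : (kernelPoly r s).natDegree ≤ 2 * s := by
  have h2 : (C r * X ^ 2 + 2 * X + C r : R[X]).natDegree ≤ 2 := by compute_degree
  have h3 : (C ((1 - r) ^ 2) * X ^ 2 : R[X]).natDegree ≤ 2 := by compute_degree
  induction s using Nat.twoStepInduction with
  | zero => simp [kernelPoly]
  | one => simpa [kernelPoly] using h2
  | more s h1 h =>
    refine (natDegree_sub_le_of_le (natDegree_mul_le_of_le h2 h)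
      (natDegree_mul_le_of_le h3 h1)).trans ?_
    omega

end Coefficients

variable {K : Type*} [Field K]

/-- The expansion of `1 / wtAB` along the line through the origin in direction `(α, β)`. -/
def kernelSeries (r α β : K) : PowerSeries K := PowerSeries.mk fun k =>
  if Even k then β ^ k * (kernelPoly r (k / 2)).eval (α / β) else 0

theorem coeff_kernelSeries (r α : K) {β : K} (hβ : β ≠ 0) (k : ℕ) :
    PowerSeries.coeff k (kernelSeries r α β) =
      ∑ p ∈ antidiagonal k, kernelCoeff r p.1 p.2 * α ^ p.1 * β ^ p.2 := by
  rw [kernelSeries, PowerSeries.coeff_mk]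
  have h : ∀ p ∈ antidiagonal k, kernelCoeff r p.1 p.2 * α ^ p.1 * β ^ p.2 =
      if Even k then (kernelPoly r (k / 2)).coeff p.1 * α ^ p.1 * β ^ p.2 else 0 := by
    intro p hp
    rw [HasAntidiagonal.mem_antidiagonal] at hp
    rw [kernelCoeff, hp]
    split_ifs <;> simp
  rw [Finset.sum_congr rfl h]
  split_ifs with hk
  · have hd := kernelPoly_natDegree_le r (k / 2)
    rw [Polynomial.eval_eq_sum_range' (n := k + 1) (by omega),
      Finset.Nat.sum_antidiagonal_eq_sum_range_succ
        (fun p q => (kernelPoly r (k / 2)).coeff p * α ^ p * β ^ q), Finset.mul_sum]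
    refine Finset.sum_congr rfl fun p hp => ?_
    have hp' : p ≤ k := Nat.lt_succ_iff.mp (Finset.mem_range.mp hp)
    rw [div_pow, ← Nat.sub_add_cancel hp', pow_add, Nat.sub_add_cancel hp']
    field_simp
  · simp

theorem wtAB_mul_kernelSeries (ρ α : K) {β : K} (hβ : β ≠ 0) :
    wtAB (PowerSeries.C ρ) (PowerSeries.C α * PowerSeries.X) (PowerSeries.C β * PowerSeries.X) *
      kernelSeries (ρ ^ 2) α β = 1 := by
  have h : wtAB (PowerSeries.C ρ) (PowerSeries.C α * PowerSeries.X)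
      (PowerSeries.C β * PowerSeries.X) =
      1 - PowerSeries.C (ρ ^ 2 * (α ^ 2 + β ^ 2) + 2 * α * β) * PowerSeries.X ^ 2 +
        PowerSeries.C ((1 - ρ ^ 2) ^ 2 * α ^ 2 * β ^ 2) * PowerSeries.X ^ 4 := by
    simp only [wtAB, wtA, wtB, map_add, map_mul, map_sub, map_pow, map_one, map_ofNat]
    ring
  rw [h, add_mul, sub_mul, one_mul, mul_assoc (PowerSeries.C _) (PowerSeries.X ^ 2),
    mul_assoc (PowerSeries.C _) (PowerSeries.X ^ 4)]
  ext k
  rw [map_add, map_sub, PowerSeries.coeff_C_mul, PowerSeries.coeff_C_mul,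
    PowerSeries.coeff_X_pow_mul', PowerSeries.coeff_X_pow_mul', PowerSeries.coeff_one]
  simp only [kernelSeries, PowerSeries.coeff_mk]
  match k with
  | 0 => simp [kernelPoly]
  | 1 => simp
  | 2 =>
    simp [kernelPoly]
    field_simp
    ring
  | 3 => simp [show ¬ Even 3 by decide]
  | k + 4 =>
    have e1 : Even (k + 4) ↔ Even k := by simp [Nat.even_add, show Even 4 by decide]
    have e2 : Even (k + 2) ↔ Even k := by simp [Nat.even_add]
    simp only [show 2 ≤ k + 4 by omega, show 4 ≤ k + 4 by omega, if_true,
      show k + 4 - 2 = k + 2 by omega, show k + 4 - 4 = k by omega, e1, e2,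
      show k + 4 ≠ 0 by omega, if_false]
    split_ifs with hk
    · rw [show (k + 4) / 2 = k / 2 + 2 by omega, show (k + 2) / 2 = k / 2 + 1 by omega, kernelPoly]
      simp
      field_simp
      ring
    · simp

open PowerSeries in
/-- Along a line of distinct nodes the kernel matrix factors through Vandermonde matrices, and the
middle factor specializes to the matrix of Taylor coefficients. -/
theorem exists_eq_vandermonde_mul_mul {n : ℕ} (α : Fin n → K) (hα : Function.Injective α)
    (hα0 : ∀ i, α i ≠ 0) (r : K) :
    ∃ H : Matrix (Fin n) (Fin n) K⟦X⟧,
      (∀ a b, constantCoeff (H a b) = kernelCoeff r a b) ∧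
      Matrix.of (fun i j => kernelSeries r (α i) (α j)) =
        Matrix.vandermonde (fun i => C (α i) * X) * H *
          (Matrix.vandermonde (fun i => C (α i) * X)).transpose := by
  set V := Matrix.vandermonde α with hV
  have hu : IsUnit V.det := isUnit_iff_ne_zero.mpr (Matrix.det_vandermonde_ne_zero_iff.mpr hα)
  set W := V⁻¹ with hW
  set F : Matrix (Fin n) (Fin n) K⟦X⟧ := Matrix.of fun i j => kernelSeries r (α i) (α j) with hF
  set G := W.map C * F * (W.map C).transpose with hG
  set u : Fin n → ℕ → K := fun a p => ∑ i, W a i * α i ^ p with hu'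
  have hup : ∀ (a : Fin n) (p : ℕ), p < n → u a p = if (a : ℕ) = p then 1 else 0 := by
    intro a p hp
    have := congrFun (congrFun (Matrix.nonsing_inv_mul V hu) a) ⟨p, hp⟩
    rw [Matrix.mul_apply, Matrix.one_apply] at this
    simpa [hu', hV, Matrix.vandermonde_apply, Fin.ext_iff] using this
  have hcoeff : ∀ k a b, coeff k (G a b) =
      ∑ p ∈ antidiagonal k, kernelCoeff r p.1 p.2 * u a p.1 * u b p.2 := by
    intro k a b
    simp only [hG, Matrix.mul_apply, Matrix.transpose_apply, Matrix.map_apply, Finset.sum_mul,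
      map_sum]
    have : ∀ i j, coeff k (C (W a i) * F i j * C (W b j)) = ∑ p ∈ antidiagonal k,
        W a i * (kernelCoeff r p.1 p.2 * α i ^ p.1 * α j ^ p.2) * W b j := by
      intro i j
      rw [coeff_mul_C, coeff_C_mul, hF, Matrix.of_apply, coeff_kernelSeries r _ (hα0 j),
        Finset.mul_sum, Finset.sum_mul]
    simp only [this, hu']
    rw [Finset.sum_comm]
    simp only [Finset.mul_sum, Finset.sum_mul]
    rw [Finset.sum_congr rfl fun i _ => Finset.sum_comm, Finset.sum_comm]
    refine Finset.sum_congr rfl fun p _ => ?_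
    rw [Finset.sum_comm]
    refine Finset.sum_congr rfl fun i _ => Finset.sum_congr rfl fun j _ => ?_
    ring
  have hzero : ∀ (a b : Fin n) (p q : ℕ), p + q ≤ a + b → (p, q) ≠ (↑a, ↑b) →
      u a p * u b q = 0 := by
    intro a b p q h hne
    have ha := a.2
    have hb := b.2
    rcases lt_or_ge p (a : ℕ) with hp | hp
    · rw [hup a p (by omega), if_neg (by omega), zero_mul]
    · have hq : q < b := by
        by_contra hq
        exact hne (by ext <;> simp <;> omega)
      rw [hup b q (by omega), if_neg (by omega), mul_zero]
  have hdvd : ∀ a b : Fin n, ∃ h : K⟦X⟧, G a b = X ^ (a + b : ℕ) * h := by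
    intro a b
    refine X_pow_dvd_iff.mpr fun k hk => ?_
    rw [hcoeff]
    refine Finset.sum_eq_zero fun p hp => ?_
    rw [HasAntidiagonal.mem_antidiagonal] at hp
    rw [mul_assoc, hzero a b p.1 p.2 (by omega) (fun h => by
      rw [Prod.ext_iff] at h; simp only at h; omega), mul_zero]
  choose H hH using hdvd
  refine ⟨H, fun a b => ?_, ?_⟩
  · have h1 := hcoeff (a + b) a b
    have h2 : coeff (a + b : ℕ) (G a b) = constantCoeff (H a b) := by
      rw [hH, coeff_X_pow_mul']
      simp
    rw [← h2, h1, Finset.sum_eq_single ((a : ℕ), (b : ℕ))]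
    · simp [hup]
    · intro p hp hne
      rw [HasAntidiagonal.mem_antidiagonal] at hp
      rw [mul_assoc, hzero a b p.1 p.2 (by omega) hne, mul_zero]
    · simp
  · have hGH : G = Matrix.diagonal (fun a : Fin n => (X : K⟦X⟧) ^ (a : ℕ)) * Matrix.of H *
        Matrix.diagonal (fun a : Fin n => (X : K⟦X⟧) ^ (a : ℕ)) := by
      ext1 a b
      rw [Matrix.mul_diagonal, Matrix.diagonal_mul, hH, Matrix.of_apply, pow_add]
      ring
    have hVx : Matrix.vandermonde (fun i => (C (α i) * X : K⟦X⟧)) =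
        V.map C * Matrix.diagonal (fun a : Fin n => (X : K⟦X⟧) ^ (a : ℕ)) := by
      ext1 i a
      simp [hV, Matrix.vandermonde_apply, mul_pow]
    have hVW : V.map C * W.map (C : K →+* K⟦X⟧) = 1 := by
      rw [← Matrix.map_mul, hW, Matrix.mul_nonsing_inv V hu]
      simp
    have hWV : (W.map (C : K →+* K⟦X⟧)).transpose * (V.map C).transpose = 1 := by
      rw [← Matrix.transpose_mul, hVW, Matrix.transpose_one]
    calc F = (V.map C * W.map C) * F * ((W.map C).transpose * (V.map C).transpose) := by
          rw [hVW, hWV, one_mul, mul_one]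
      _ = V.map C * G * (V.map C).transpose := by rw [hG]; simp only [mul_assoc]
      _ = _ := by
          rw [hGH, hVx, Matrix.transpose_mul, Matrix.diagonal_transpose]
          change _ = (_ * _) * Matrix.of H * _
          simp only [mul_assoc]

open PowerSeries in
/-- The homogeneous limit of the Izergin–Korepin formula. -/
theorem partitionFn_zero_eq_det [CharZero K] {ρ : K} (hρ : ρ ≠ 0) (n : ℕ) :
    partitionFn ρ (fun _ : Fin n => 0) (List.replicate n 0) =
      (Matrix.of fun a b : Fin n => kernelCoeff (ρ ^ 2) a b).det := by
  set α : Fin n → K := fun i => ((i : ℕ) + 1 : ℕ) with hα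
  have hαi : Function.Injective α := by
    intro i j h
    have : (i : ℕ) + 1 = j + 1 := Nat.cast_injective h
    exact Fin.ext (by omega)
  have hα0 : ∀ i, α i ≠ 0 := fun i => Nat.cast_ne_zero.mpr (Nat.succ_ne_zero _)
  obtain ⟨H, hH, hF⟩ := exists_eq_vandermonde_mul_mul α hαi hα0 (ρ ^ 2)
  set x : Fin n → K⟦X⟧ := fun i => C (α i) * X with hx
  have hxi : Function.Injective x := by
    intro i j h
    have := congrArg (coeff 1) h
    simp only [hx, coeff_C_mul, coeff_one_X, mul_one] at this
    exact hαi this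
  have hx0 : ∀ i, constantCoeff (x i) = 0 := fun i => by simp [hx]
  have hIK := izergin_korepin (C ρ) x x hxi hxi
    (by
      intro i
      set d : K⟦X⟧ := C ρ - (1 - C ρ ^ 2) * x i with hd
      have hd0 : constantCoeff d ≠ 0 := by simpa [hd, hx0] using hρ
      refine ⟨-(1 + C ρ * x i) * d⁻¹, ?_⟩
      have : d * d⁻¹ = 1 := PowerSeries.mul_inv_cancel d hd0
      unfold wtA
      linear_combination -(1 + C ρ * x i) * this)
    (by
      intro i j h
      have := congrArg constantCoeff h
      simp [wtA, hx0] at this)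
    (by
      intro i j h
      have := congrArg constantCoeff h
      simp only [rWeight, map_add, map_mul, map_sub, map_one, map_pow, hx0, map_ofNat,
        constantCoeff_C, map_zero, sub_self, mul_zero, add_zero, mul_one] at this
      exact mul_ne_zero two_ne_zero hρ this)
  have hclear : clearedMatrix (C ρ) x x = Matrix.of fun i j =>
      (∏ k, wtAB (C ρ) (x k) (x j)) *
        (Matrix.of fun i j => kernelSeries (ρ ^ 2) (α i) (α j)) i j := by
    ext1 i j
    rw [Matrix.of_apply, Matrix.of_apply, clearedMatrix, Matrix.of_apply,
      ← Finset.mul_prod_erase univ (fun k => wtAB (C ρ) (x k) (x j)) (Finset.mem_univ i),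
      mul_right_comm, wtAB_mul_kernelSeries ρ _ (hα0 j), one_mul,
      ← Finset.mul_prod_erase univ _ (Finset.mem_univ i), if_pos rfl, one_mul]
    exact Finset.prod_congr rfl fun k hk => if_neg (Finset.ne_of_mem_erase hk)
  rw [hclear, Matrix.det_mul_row, hF, Matrix.det_mul, Matrix.det_mul, Matrix.det_transpose] at hIK
  have hV : (Matrix.vandermonde x).det ≠ 0 := Matrix.det_vandermonde_ne_zero_iff.mpr hxi
  have hZ : partitionFn (C ρ) x (List.ofFn x) =
      (∏ j, ∏ k, wtAB (C ρ) (x k) (x j)) * H.det := by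
    refine mul_right_cancel₀ (mul_ne_zero hV hV) (hIK.trans ?_)
    ring
  have := congrArg constantCoeff hZ
  rw [← partitionFn_map, map_mul, map_prod, RingHom.map_det, constantCoeff_C] at this
  have e1 : (constantCoeff ∘ x : Fin n → K) = fun _ => 0 := funext hx0
  have e2 : (List.ofFn x).map constantCoeff = List.replicate n (0 : K) := by
    rw [List.map_ofFn, e1, List.ofFn_const]
  have e3 : (constantCoeff (R := K)).mapMatrix H =
      Matrix.of fun a b : Fin n => kernelCoeff (ρ ^ 2) a b := by
    ext a b; simp [hH]
  rw [e1, e2, e3, Finset.prod_eq_one, one_mul] at this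
  · exact this
  · intro j _
    rw [map_prod]
    exact Finset.prod_eq_one fun k _ => by simp [wtAB, wtA, wtB, hx0]

/-- Starting from the state `h`, adding the entries of `r` one at a time keeps the running total
in `{0, 1}` and ends at `k`. -/
def IsPath : {n : ℕ} → Bool → (Fin n → ℤ) → Bool → Prop
  | 0, h, _, k => h = k
  | _ + 1, h, r, k => ∃ g : Bool, h.toInt + r 0 = g.toInt ∧ IsPath g (Fin.tail r) k

theorem isPath_iff {n : ℕ} (h : Bool) (r : Fin n → ℤ) (h' : Bool) :
    IsPath h r h' ↔ (∀ j, h.toInt + ∑ i ∈ Iic j, r i = 0 ∨ h.toInt + ∑ i ∈ Iic j, r i = 1) ∧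
      h.toInt + ∑ i, r i = h'.toInt := by
  induction n generalizing h with
  | zero => cases h <;> cases h' <;> simp [IsPath]
  | succ n ih =>
    have hsum : ∀ j : Fin n, ∑ i ∈ Iic j.succ, r i = r 0 + ∑ i ∈ Iic j, Fin.tail r i := by
      intro j
      have : Iic j.succ = insert 0 ((Iic j).map (Fin.succEmb n)) := by
        ext i
        cases i using Fin.cases <;> simp
      rw [this, Finset.sum_insert (by simp), Finset.sum_map]
      rfl
    have hsum0 : ∑ i ∈ Iic (0 : Fin (n + 1)), r i = r 0 := by
      have : Iic (0 : Fin (n + 1)) = {0} := by ext i; simp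
      rw [this, Finset.sum_singleton]
    simp only [IsPath, ih, Fin.forall_fin_succ, hsum, hsum0, Fin.sum_univ_succ, ← add_assoc]
    constructor
    · rintro ⟨g, hg, h1, h2⟩
      rw [hg]
      exact ⟨⟨by cases g <;> simp, h1⟩, h2⟩
    · rintro ⟨⟨h0 | h0, h1⟩, h2⟩
      · refine ⟨false, h0, ?_⟩
        rw [h0] at h1 h2
        exact ⟨h1, h2⟩
      · refine ⟨true, h0, ?_⟩
        rw [h0] at h1 h2
        exact ⟨h1, h2⟩

theorem IsPath.mem {n : ℕ} {h h' : Bool} {r : Fin n → ℤ} (hr : IsPath h r h') (j : Fin n) :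
    r j = -1 ∨ r j = 0 ∨ r j = 1 := by
  induction n generalizing h with
  | zero => exact j.elim0
  | succ n ih =>
    obtain ⟨g, hg, hr⟩ := hr
    cases j using Fin.cases with
    | zero => cases h <;> cases g <;> simp at hg <;> omega
    | succ j => exact ih hr j

/-- The factor contributed by a matrix entry to the `q`-enumeration. -/
def entryWeight (q : R) (e : ℤ) : R := if e = -1 then q else 1

open scoped Classical in
theorem rowWeight_zero (ρ : R) {n : ℕ} (s t : Fin n → Bool) (h h' : Bool) :
    rowWeight ρ 0 (fun _ => 0) s t h h' =
      if IsPath h (fun j => (t j).toInt - (s j).toInt) h' then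
        ∏ j, entryWeight (4 * ρ ^ 2) ((t j).toInt - (s j).toInt) else 0 := by
  induction n generalizing h with
  | zero => simp [rowWeight, IsPath, Matrix.one_apply]
  | succ n ih =>
    have e : (Fin.tail (fun _ : Fin (n + 1) => (0 : R)) : Fin n → R) = fun _ => 0 := rfl
    rw [rowWeight, Matrix.mul_apply, e]
    have e' : Fin.tail (fun j => (t j).toInt - (s j).toInt) =
        fun j => (Fin.tail t j).toInt - (Fin.tail s j).toInt := rfl
    simp only [ih, IsPath, Fin.prod_univ_succ, Fintype.sum_bool, Bool.exists_bool, e']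
    have hv : ∀ g, vertex ρ 0 0 (s 0) (t 0) h g =
        if h.toInt + ((t 0).toInt - (s 0).toInt) = g.toInt then
          entryWeight (4 * ρ ^ 2) ((t 0).toInt - (s 0).toInt) else 0 := by
      intro g
      cases s 0 <;> cases t 0 <;> cases h <;> cases g <;>
        simp [vertex, wtA, wtB, wtC, entryWeight]
    rw [hv, hv]
    by_cases h0 : h.toInt + ((t 0).toInt - (s 0).toInt) = 0
    · simp [h0]
      rfl
    · by_cases h1 : h.toInt + ((t 0).toInt - (s 0).toInt) = 1
      · simp [h1]
        rfl
      · simp [h0, h1]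

/-- The matrices of height `k` whose rows are paths from `0` to `1` and whose columns are paths
from `s` to `t`. -/
def IsPathMatrix {k n : ℕ} (s t : Fin n → Bool) (B : Fin k → Fin n → ℤ) : Prop :=
  (∀ i, IsPath false (B i) true) ∧ ∀ j, IsPath (s j) (fun i => B i j) (t j)

open scoped Classical in
/-- The finite set of all path matrices with given boundary. -/
def pathMatrices (k : ℕ) {n : ℕ} (s t : Fin n → Bool) : Finset (Fin k → Fin n → ℤ) :=
  (Fintype.piFinset fun _ => Fintype.piFinset fun _ => {-1, 0, 1}).filter (IsPathMatrix s t)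

theorem mem_pathMatrices {k n : ℕ} {s t : Fin n → Bool} {B : Fin k → Fin n → ℤ} :
    B ∈ pathMatrices k s t ↔ IsPathMatrix s t B := by
  simp only [pathMatrices, mem_filter, Fintype.mem_piFinset, mem_insert, mem_singleton,
    and_iff_right_iff_imp]
  exact fun h i j => (h.1 i).mem j

theorem isPathMatrix_cons {k n : ℕ} {s t u : Fin n → Bool} {B : Fin k → Fin n → ℤ} :
    IsPathMatrix s u (Fin.cons (fun j => (t j).toInt - (s j).toInt) B : Fin (k + 1) → Fin n → ℤ) ↔
      IsPath false (fun j => (t j).toInt - (s j).toInt) true ∧ IsPathMatrix t u B := by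
  have hinj : ∀ a b : Bool, a.toInt = b.toInt ↔ a = b := by decide
  simp only [IsPathMatrix, Fin.forall_fin_succ, Fin.cons_zero, Fin.cons_succ, IsPath,
    add_sub_cancel, hinj, exists_eq_left', and_assoc]
  rfl

open scoped Classical in
theorem transfer_pow_zero (ρ : R) {n : ℕ} (k : ℕ) (s u : Fin n → Bool) :
    (transfer ρ (fun _ : Fin n => (0 : R)) 0 ^ k) s u =
      ∑ B ∈ pathMatrices k s u, ∏ i, ∏ j, entryWeight (4 * ρ ^ 2) (B i j) := by
  induction k generalizing s with
  | zero =>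
    have : ∀ B : Fin 0 → Fin n → ℤ, IsPathMatrix s u B ↔ s = u := by
      intro B
      simp [IsPathMatrix, IsPath, funext_iff]
    by_cases h : s = u
    · have hp : pathMatrices 0 s u = {Fin.elim0} := by
        ext B
        rw [mem_pathMatrices, this, mem_singleton]
        exact iff_of_true h (Subsingleton.elim _ _)
      rw [hp]
      simp [h]
    · have hp : pathMatrices 0 s u = ∅ := by
        ext B
        simp [mem_pathMatrices, this, h]
      simp [hp, h]
  | succ k ih =>
    rw [pow_succ', Matrix.mul_apply]
    have ht : ∀ t, transfer ρ (fun _ : Fin n => (0 : R)) 0 s t =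
        if IsPath false (fun j => (t j).toInt - (s j).toInt) true then
          ∏ j, entryWeight (4 * ρ ^ 2) ((t j).toInt - (s j).toInt) else 0 :=
      fun t => rowWeight_zero ρ s t false true
    simp only [ih, ht, ite_mul, zero_mul]
    rw [← Finset.sum_filter]
    simp only [Finset.mul_sum]
    rw [Finset.sum_sigma']
    have hB : ∀ B : Fin (k + 1) → Fin n → ℤ, IsPathMatrix s u B →
        (fun j => (decide ((s j).toInt + B 0 j = 1)).toInt - (s j).toInt) = B 0 := by
      intro B hB
      funext j
      obtain ⟨g, hg, -⟩ := hB.2 j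
      simp only at hg
      rw [hg]
      cases g <;> simp at hg ⊢ <;> omega
    refine Finset.sum_bij'
      (fun p _ => (Fin.cons (fun j => (p.1 j).toInt - (s j).toInt) p.2 : Fin (k + 1) → Fin n → ℤ))
      (fun B _ => ⟨fun j => decide ((s j).toInt + B 0 j = 1), Fin.tail B⟩) ?_ ?_ ?_ ?_ ?_
    · intro p hp
      simpa only [mem_sigma, mem_filter, mem_univ, true_and, mem_pathMatrices,
        isPathMatrix_cons] using hp
    · intro B h
      rw [mem_pathMatrices] at h
      have h' := h
      rw [← Fin.cons_self_tail B, ← hB B h, isPathMatrix_cons] at h'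
      simpa only [mem_sigma, mem_filter, mem_univ, true_and, mem_pathMatrices] using h'
    · rintro ⟨t, B⟩ -
      have : ∀ b : Bool, decide (b.toInt = 1) = b := by decide
      simp [this]
    · intro B h
      rw [mem_pathMatrices] at h
      simp only [hB B h, Fin.cons_self_tail]
    · intro p _
      rw [Fin.prod_univ_succ]
      simp

theorem isPathMatrix_iff_isASM {n : ℕ} (A : Matrix (Fin n) (Fin n) ℤ) :
    IsPathMatrix (fun _ => false) (fun _ => true) A ↔ IsASM A := by
  constructor
  · intro h
    have hm := fun i j => (h.1 i).mem j
    simp only [IsPathMatrix, isPath_iff, Bool.toInt_false, Bool.toInt_true, zero_add] at h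
    exact ⟨hm, fun i => (h.1 i).2, fun j => (h.2 j).2, fun i => (h.1 i).1, fun i j => (h.2 j).1 i⟩
  · rintro ⟨-, h1, h2, h3, h4⟩
    simp only [IsPathMatrix, isPath_iff, Bool.toInt_false, Bool.toInt_true, zero_add]
    exact ⟨fun i => ⟨h3 i, h1 i⟩, fun j => ⟨fun i => h4 i j, h2 j⟩⟩

theorem mem_asmFinset {n : ℕ} {A : Matrix (Fin n) (Fin n) ℤ} : A ∈ asmFinset n ↔ IsASM A := by
  simp only [asmFinset, mem_filter, mem_image, mem_univ, true_and, and_iff_right_iff_imp]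
  intro h
  refine ⟨Matrix.of fun i j => if A i j = -1 then 0 else if A i j = 0 then 1 else 2, ?_⟩
  ext i j
  rcases h.1 i j with e | e | e <;> simp [e]

theorem partitionFn_zero_eq_asmEnum (ρ : R) (n : ℕ) :
    partitionFn ρ (fun _ : Fin n => 0) (List.replicate n 0) = asmEnum n (4 * ρ ^ 2) := by
  rw [partitionFn, List.map_replicate, List.prod_replicate, transfer_pow_zero, asmEnum]
  refine Finset.sum_equiv Matrix.of (fun A => ?_) fun A _ => ?_
  · rw [mem_pathMatrices, mem_asmFinset, ← isPathMatrix_iff_isASM]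
    rfl
  · rw [asmMu, ← Fintype.prod_prod_type' (f := fun i j => entryWeight (4 * ρ ^ 2) (A i j))]
    simp only [entryWeight]
    rw [Finset.prod_ite, Finset.prod_const, Finset.prod_const_one, mul_one]
    rfl

section Factorization
open Polynomial

theorem asmPoly_eq_det (n : ℕ) :
    asmPoly n = (Matrix.of fun a b : Fin n => kernelCoeff (C (1 / 4 : ℚ) * X) a b).det := by
  refine Polynomial.eq_of_infinite_eval_eq _ _ (Set.Infinite.mono ?_
    (Set.infinite_range_of_injective (f := fun m : ℕ => 4 * ((m : ℚ) + 1) ^ 2) ?_))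
  · rintro _ ⟨m, rfl⟩
    have hm : (m : ℚ) + 1 ≠ 0 := by positivity
    have h := (partitionFn_zero_eq_asmEnum ((m : ℚ) + 1) n).symm.trans
      (partitionFn_zero_eq_det hm n)
    have hl : (asmPoly n).eval (4 * ((m : ℚ) + 1) ^ 2) = asmEnum n (4 * ((m : ℚ) + 1) ^ 2) := by
      simp [asmPoly, asmEnum, eval_finsetSum]
    have hr : ((Matrix.of fun a b : Fin n => kernelCoeff (C (1 / 4 : ℚ) * X) a b).det).eval
        (4 * ((m : ℚ) + 1) ^ 2) =
        (Matrix.of fun a b : Fin n => kernelCoeff (((m : ℚ) + 1) ^ 2) a b).det := by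
      rw [← coe_evalRingHom, RingHom.map_det]
      congr 1
      ext a b
      simp only [RingHom.mapMatrix_apply, Matrix.map_apply, Matrix.of_apply]
      rw [← kernelCoeff_map]
      congr 1
      simp only [coe_evalRingHom, eval_mul, eval_C, eval_X]
      ring
    exact hl.trans (h.trans hr.symm)
  · intro a b h
    have hsq : ((a : ℚ) + 1) ^ 2 = ((b : ℚ) + 1) ^ 2 := mul_left_cancel₀ four_ne_zero h
    rw [sq_eq_sq₀ (by positivity) (by positivity)] at hsq
    exact_mod_cast add_right_cancel hsq

/-- The determinant over the indices of parity `ε`. -/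
def parityDet (r : R) (ε m : ℕ) : R :=
  (Matrix.of fun i j : Fin m => kernelCoeff r (2 * i + ε) (2 * j + ε)).det

/-- The even and the odd indices below `k + m`, where `k = m` or `k = m + 1`. -/
def parityEquiv (k m : ℕ) (h1 : m ≤ k) (h2 : k ≤ m + 1) : Fin k ⊕ Fin m ≃ Fin (k + m) where
  toFun := Sum.elim (fun i => ⟨2 * i, by omega⟩) (fun i => ⟨2 * i + 1, by omega⟩)
  invFun a := if (a : ℕ) % 2 = 0 then
    if h : (a : ℕ) / 2 < k then Sum.inl ⟨a / 2, h⟩ else Sum.inl ⟨0, by omega⟩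
    else if h : (a : ℕ) / 2 < m then Sum.inr ⟨a / 2, h⟩ else Sum.inl ⟨0, by omega⟩
  left_inv := by
    rintro (i | i)
    · have : 2 * (i : ℕ) / 2 = i := by omega
      simp [this]
    · have : (2 * (i : ℕ) + 1) / 2 = i := by omega
      simp [this]
  right_inv := by
    intro a
    have := a.2
    ext
    by_cases h : (a : ℕ) % 2 = 0
    · have h' : (a : ℕ) / 2 < k := by omega
      simp only [h, h', if_true, dif_pos, Sum.elim_inl]
      omega
    · have h' : (a : ℕ) / 2 < m := by omega
      simp only [h, h', if_false, dif_pos, Sum.elim_inr]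
      omega

theorem det_kernelCoeff (r : R) (k m : ℕ) (h1 : m ≤ k) (h2 : k ≤ m + 1) :
    (Matrix.of fun a b : Fin (k + m) => kernelCoeff r a b).det =
      parityDet r 0 k * parityDet r 1 m := by
  rw [← Matrix.det_submatrix_equiv_self (parityEquiv k m h1 h2), parityDet, parityDet,
    ← Matrix.det_fromBlocks_zero₂₁ _ 0]
  congr 1
  have hodd : ∀ i j : ℕ, ¬ Even (2 * i + (2 * j + 1)) := by
    intro i j
    rw [Nat.not_even_iff]
    omega
  have hodd' : ∀ i j : ℕ, ¬ Even (2 * i + 1 + 2 * j) := by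
    intro i j
    rw [Nat.not_even_iff]
    omega
  ext (i | i) (j | j)
  · simp [parityEquiv]
  · simp [parityEquiv, kernelCoeff, hodd]
  · simp [parityEquiv, kernelCoeff, hodd']
  · simp [parityEquiv]

end Factorization

end SixVertex

/-- there is a sequence of polynomials P_m(Q) ∈ ℚ[Q] such that for every
positive n: A_{2n}(Q) = 2·P_{2n}(Q)·P_{2n+1}(Q) and A_{2n+1}(Q) = P_{2n+1}(Q)·P_{2n+2}(Q). -/
theorem statement9 :
    ∃ P : ℕ → Polynomial ℚ,
      ∀ n : ℕ, 1 ≤ n →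
        asmPoly (2 * n) = 2 * P (2 * n) * P (2 * n + 1) ∧
        asmPoly (2 * n + 1) = P (2 * n + 1) * P (2 * n + 2) := by
  set r : Polynomial ℚ := Polynomial.C (1 / 4 : ℚ) * Polynomial.X
  refine ⟨fun k => if Even k then Polynomial.C (2 ^ (k / 2)) * SixVertex.parityDet r 0 (k / 2)
    else Polynomial.C ((2 ^ (k / 2 + 1))⁻¹) * SixVertex.parityDet r 1 (k / 2), fun n _ => ?_⟩
  have o : ¬ Even (2 * n + 1) := by simp
  have e : Even (2 * n + 2) := by simp [Nat.even_add]
  simp only [even_two_mul, o, e, if_true, if_false, show 2 * n / 2 = n by omega,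
    show (2 * n + 1) / 2 = n by omega, show (2 * n + 2) / 2 = n + 1 by omega]
  have hc : (Polynomial.C (2 ^ (n + 1)) * Polynomial.C ((2 ^ (n + 1))⁻¹) : Polynomial ℚ) = 1 := by
    rw [← Polynomial.C_mul, mul_inv_cancel₀ (by positivity), Polynomial.C_1]
  have h2 : (2 * Polynomial.C (2 ^ n) : Polynomial ℚ) = Polynomial.C (2 ^ (n + 1)) := by
    rw [pow_succ', Polynomial.C_mul, map_ofNat]
  constructor
  · rw [two_mul n, SixVertex.asmPoly_eq_det, SixVertex.det_kernelCoeff r n n le_rfl (Nat.le_succ n)]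
    linear_combination -(SixVertex.parityDet r 0 n * SixVertex.parityDet r 1 n) * hc -
      Polynomial.C ((2 ^ (n + 1))⁻¹) * SixVertex.parityDet r 0 n * SixVertex.parityDet r 1 n * h2
  · rw [show 2 * n + 1 = n + 1 + n by omega, SixVertex.asmPoly_eq_det,
      SixVertex.det_kernelCoeff r (n + 1) n (Nat.le_succ n) le_rfl]
    linear_combination -(SixVertex.parityDet r 0 (n + 1) * SixVertex.parityDet r 1 n) * hc

end
end

section
/- For every positive integer n the following identity holds in ℚ[x]: d_{n,1}(x,−1) = det_{1≤i,j≤n}( binom(x+i+j−2, j−1)·(j−i+1) ) = (2⌊(n+1)/2⌋−1)!! · ∏_{i=1}^{⌊n/2⌋}(x+2i), where (2m−1)!! = 1·3·5⋯(2m−1) denotes the double factorial. (Here a_{j−i+1}(−1) = j−i+1 for all i,j.) -/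
open Polynomial Finset

noncomputable section

/-- The polynomial binomial coefficient binom(y, m) = y(y-1)⋯(y-m+1)/m! over a field F. -/
noncomputable def binomP (F : Type*) [Field F] (y : Polynomial F) (m : ℕ) : Polynomial F :=
  Polynomial.C ((m.factorial : F))⁻¹ * ∏ t ∈ Finset.range m, (y - (t : Polynomial F))

/-- a_m(q) for a numeric value q in a field: a_m = ∑_{l=0}^{m-1}(-q)^l for m > 0, a_0 = 0,
a_m = -∑_{l=1}^{-m}(-q)^{-l} for m < 0. -/
noncomputable def aF (F : Type*) [Field F] (q : F) (m : ℤ) : F :=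
  if 0 < m then ∑ l ∈ Finset.range m.toNat, (-q) ^ l
  else -∑ l ∈ Finset.range (-m).toNat, (-q) ^ (-(l + 1 : ℤ))

/-- d_{n,k}(x,q) ∈ F[x] for a numeric value q:
the determinant of the matrix with (1-based) (i,j) entry binom(x+i+j-2, j-1)·a_{j-i+k}(q). -/
noncomputable def dF (F : Type*) [Field F] (n : ℕ) (k : ℤ) (q : F) : Polynomial F :=
  Matrix.det (Matrix.of fun i j : Fin n =>
    binomP F (Polynomial.X + ((i : ℕ) : Polynomial F) + ((j : ℕ) : Polynomial F)) (j : ℕ) *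
      Polynomial.C (aF F q ((j : ℤ) - (i : ℤ) + k)))

/-- The binomial coefficient `binom(y, j - k)`, read as zero when `j < k`. -/
noncomputable def truncBinom (F : Type*) [Field F] (y : Polynomial F) (j k : ℕ) : Polynomial F :=
  if k ≤ j then binomP F y (j - k) else 0

lemma binomP_zero {F : Type*} [Field F] (y : Polynomial F) : binomP F y 0 = 1 := by
  simp [binomP]

lemma succ_mul_binomP_succ {F : Type*} [Field F] [CharZero F] (y : Polynomial F) (m : ℕ) :
    ((m : Polynomial F) + 1) * binomP F y (m + 1) = (y - m) * binomP F y m := by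
  have h : Polynomial.C ((m + 1).factorial : F)⁻¹ * ((m : Polynomial F) + 1)
      = Polynomial.C (m.factorial : F)⁻¹ := by
    have hm : ((m : Polynomial F) + 1) = Polynomial.C ((m : F) + 1) := by simp
    have hm0 : (m : F) + 1 ≠ 0 := Nat.cast_add_one_ne_zero m
    rw [hm, ← Polynomial.C_mul, Nat.factorial_succ]
    congr 1
    push_cast
    field_simp
  unfold binomP
  rw [Finset.prod_range_succ, ← h]
  ring

/-- Pascal's rule. -/
lemma binomP_add_one_succ {F : Type*} [Field F] [CharZero F] (y : Polynomial F) (m : ℕ) :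
    binomP F (y + 1) (m + 1) = binomP F y (m + 1) + binomP F y m := by
  induction m with
  | zero =>
    have h₁ := succ_mul_binomP_succ (y + 1) 0
    have h₂ := succ_mul_binomP_succ y 0
    simp only [binomP_zero, Nat.cast_zero] at h₁ h₂ ⊢
    linear_combination h₁ - h₂
  | succ m ih =>
    have h₁ := succ_mul_binomP_succ (y + 1) (m + 1)
    have h₂ := succ_mul_binomP_succ y (m + 1)
    have h₃ := succ_mul_binomP_succ y m
    have hm : ((m + 1 : ℕ) : Polynomial F) + 1 ≠ 0 := Nat.cast_add_one_ne_zero _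
    apply mul_left_cancel₀ hm
    rw [ih] at h₁
    push_cast at h₁ h₂ h₃ ⊢
    linear_combination h₁ - h₂ - h₃

lemma truncBinom_self {F : Type*} [Field F] (y : Polynomial F) (j : ℕ) :
    truncBinom F y j j = 1 := by
  simp [truncBinom, binomP_zero]

lemma truncBinom_of_lt {F : Type*} [Field F] (y : Polynomial F) {j k : ℕ} (h : j < k) :
    truncBinom F y j k = 0 := by
  simp [truncBinom, h]

lemma truncBinom_add_one {F : Type*} [Field F] [CharZero F] (y : Polynomial F) (j k : ℕ) :
    truncBinom F (y + 1) j k = truncBinom F y j k + truncBinom F y j (k + 1) := by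
  rcases lt_trichotomy k j with h | rfl | h
  · obtain ⟨m, rfl⟩ := Nat.exists_eq_add_of_lt h
    have e₁ : k + m + 1 - k = m + 1 := by omega
    have e₂ : k + m + 1 - (k + 1) = m := by omega
    simp only [truncBinom, e₁, e₂, if_pos h.le, if_pos (Nat.succ_le_of_lt h)]
    exact binomP_add_one_succ y m
  · rw [truncBinom_self, truncBinom_self, truncBinom_of_lt y (Nat.lt_succ_self k), add_zero]
  · rw [truncBinom_of_lt _ h, truncBinom_of_lt _ h,
      truncBinom_of_lt _ (h.trans (Nat.lt_succ_self k)), add_zero]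

lemma sub_mul_truncBinom {F : Type*} [Field F] [CharZero F] (y : Polynomial F) (j k : ℕ) :
    ((j : Polynomial F) - k) * truncBinom F (y + j) j k
      = (y + k + 1) * truncBinom F (y + j) j (k + 1) := by
  rcases lt_trichotomy k j with h | rfl | h
  · obtain ⟨m, rfl⟩ := Nat.exists_eq_add_of_lt h
    have e₁ : k + m + 1 - k = m + 1 := by omega
    have e₂ : k + m + 1 - (k + 1) = m := by omega
    simp only [truncBinom, e₁, e₂, if_pos h.le, if_pos (Nat.succ_le_of_lt h)]
    have h₁ := succ_mul_binomP_succ (y + ((k + m + 1 : ℕ) : Polynomial F)) m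
    push_cast at h₁ ⊢
    linear_combination h₁
  · simp [truncBinom_of_lt _ (Nat.lt_succ_self k)]
  · simp [truncBinom_of_lt _ h, truncBinom_of_lt _ (h.trans (Nat.lt_succ_self k))]

/-- The Chu–Vandermonde convolution. -/
lemma sum_choose_mul_truncBinom {F : Type*} [Field F] [CharZero F] (n i j : ℕ) (hi : i < n)
    (y : Polynomial F) :
    ∑ k ∈ Finset.range n, (i.choose k : Polynomial F) * truncBinom F y j k
      = binomP F (y + i) j := by
  induction i generalizing y with
  | zero =>
    rw [Finset.sum_eq_single_of_mem 0 (Finset.mem_range.2 hi)]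
    · simp [truncBinom]
    · intro k _ hk
      simp [Nat.choose_eq_zero_of_lt (Nat.pos_of_ne_zero hk)]
  | succ i ih =>
    have h := ih (Nat.lt_of_succ_lt hi) (y + 1)
    have hy : y + ((i + 1 : ℕ) : Polynomial F) = y + 1 + i := by push_cast; ring
    rw [hy, ← h]
    obtain ⟨n, rfl⟩ := Nat.exists_eq_succ_of_ne_zero (Nat.ne_zero_of_lt hi)
    have hin : i.choose n = 0 := Nat.choose_eq_zero_of_lt (by omega)
    simp only [truncBinom_add_one, mul_add, Finset.sum_add_distrib]
    rw [Finset.sum_range_succ', Finset.sum_range_succ' (fun k => (i.choose k : Polynomial F) * _),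
      Finset.sum_range_succ (fun k => (i.choose k : Polynomial F) * truncBinom F y j (k + 1))]
    simp only [hin, Nat.choose_succ_succ', Nat.cast_add, add_mul, Finset.sum_add_distrib,
      Nat.choose_zero_right, Nat.cast_zero, zero_mul]
    ring

/-- The entries of the lower triangular factor. -/
noncomputable def lowerEntry (i k : ℕ) : Polynomial ℚ :=
  if Even k then (i.choose k : Polynomial ℚ) - i.choose (k + 1)
  else (X + (k : Polynomial ℚ) + 1) * (i.choose k : Polynomial ℚ)
    - ((k : Polynomial ℚ) + 1) * (i.choose (k + 1) : Polynomial ℚ)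

/-- The entries of the upper triangular factor. -/
noncomputable def upperEntry (k j : ℕ) : Polynomial ℚ :=
  if Even k then
    ((k : Polynomial ℚ) + 1) * truncBinom ℚ (X + (j : Polynomial ℚ)) j k
      + (X + (k : Polynomial ℚ) + 1) * truncBinom ℚ (X + (j : Polynomial ℚ)) j (k + 1)
  else truncBinom ℚ (X + (j : Polynomial ℚ)) j k + truncBinom ℚ (X + (j : Polynomial ℚ)) j (k + 1)

lemma lowerEntry_of_lt {i k : ℕ} (h : i < k) : lowerEntry i k = 0 := by
  simp [lowerEntry, Nat.choose_eq_zero_of_lt h,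
    Nat.choose_eq_zero_of_lt (h.trans (Nat.lt_succ_self k))]

lemma upperEntry_of_lt {j k : ℕ} (h : j < k) : upperEntry k j = 0 := by
  simp [upperEntry, truncBinom_of_lt _ h, truncBinom_of_lt _ (h.trans (Nat.lt_succ_self k))]

lemma lowerEntry_mul_upperEntry_self (k : ℕ) :
    lowerEntry k k * upperEntry k k
      = if Even k then (k : Polynomial ℚ) + 1 else X + (k : Polynomial ℚ) + 1 := by
  simp only [lowerEntry, upperEntry, truncBinom_self, truncBinom_of_lt _ (Nat.lt_succ_self k),
    Nat.choose_self, Nat.choose_succ_self]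
  split_ifs <;> simp

/-- Partial sums of the product of the triangular factors, with their boundary term. -/
lemma sum_lowerEntry_mul_upperEntry (i j m : ℕ) :
    ∑ k ∈ Finset.range m, lowerEntry i k * upperEntry k j
      = ((j : Polynomial ℚ) - i + 1) *
          ∑ k ∈ Finset.range m, (i.choose k : Polynomial ℚ) * truncBinom ℚ (X + (j : Polynomial ℚ)) j k
        - (if Even m then (m : Polynomial ℚ) else X + (m : Polynomial ℚ)) *
          ((i.choose m : Polynomial ℚ) * truncBinom ℚ (X + (j : Polynomial ℚ)) j m) := by
  induction m with
  | zero => simp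
  | succ m ih =>
    rw [Finset.sum_range_succ, Finset.sum_range_succ, ih]
    have hg := sub_mul_truncBinom (X : Polynomial ℚ) j m
    have hf : ((m : Polynomial ℚ) + 1) * i.choose (m + 1) = (i - m) * i.choose m := by
      rcases le_or_gt m i with h | h
      · have := Nat.choose_succ_right_eq i m
        have h' := congrArg (Nat.cast : ℕ → Polynomial ℚ) this
        push_cast [Nat.cast_sub h] at h'
        linear_combination h'
      · simp [Nat.choose_eq_zero_of_lt h, Nat.choose_eq_zero_of_lt (h.trans (Nat.lt_succ_self m))]
    unfold lowerEntry upperEntry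
    generalize truncBinom ℚ (X + (j : Polynomial ℚ)) j m = g at *
    generalize truncBinom ℚ (X + (j : Polynomial ℚ)) j (m + 1) = g' at *
    by_cases hm : Even m
    · have hm' : ¬ Even (m + 1) := by simpa [Nat.even_add_one] using hm
      simp only [if_pos hm, if_neg hm', Nat.cast_add, Nat.cast_one]
      linear_combination (-(i.choose m : Polynomial ℚ)) * hg - g * hf
    · have hm' : Even (m + 1) := by simpa [Nat.even_add_one] using hm
      simp only [if_neg hm, if_pos hm', Nat.cast_add, Nat.cast_one]
      linear_combination (-(i.choose m : Polynomial ℚ)) * hg - g * hf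

lemma matrix_eq_lower_mul_upper (n : ℕ) :
    (Matrix.of fun i j : Fin n =>
      binomP ℚ (X + ((i : ℕ) : Polynomial ℚ) + ((j : ℕ) : Polynomial ℚ)) (j : ℕ) *
        C (((j : ℕ) : ℚ) - ((i : ℕ) : ℚ) + 1))
      = (Matrix.of fun i k : Fin n => lowerEntry i k) *
        (Matrix.of fun k j : Fin n => upperEntry k j) := by
  ext1 i j
  simp only [Matrix.mul_apply, Matrix.of_apply]
  rw [Fin.sum_univ_eq_sum_range (fun k => lowerEntry i k * upperEntry k j),
    sum_lowerEntry_mul_upperEntry, sum_choose_mul_truncBinom n i j i.isLt,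
    Nat.choose_eq_zero_of_lt i.isLt, add_right_comm]
  simp [mul_comm]

lemma doubleFactorial_two_mul_succ_sub_one (m : ℕ) :
    (2 * (m + 1) - 1).doubleFactorial = (2 * m + 1) * (2 * m - 1).doubleFactorial := by
  cases m with
  | zero => rfl
  | succ m => exact Nat.doubleFactorial_add_two (2 * m + 1)

lemma prod_pivots_two_mul (m : ℕ) :
    ∏ k ∈ Finset.range (2 * m), (if Even k then (k : Polynomial ℚ) + 1 else X + (k : Polynomial ℚ) + 1)
      = C ((2 * m - 1).doubleFactorial : ℚ) *
        ∏ i ∈ Finset.range m, (X + C (2 * (i : ℚ) + 2)) := by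
  induction m with
  | zero => simp
  | succ m ih =>
    rw [mul_add_one, Finset.prod_range_succ, Finset.prod_range_succ, ih, ← mul_add_one,
      doubleFactorial_two_mul_succ_sub_one,
      Finset.prod_range_succ]
    simp only [even_two_mul, if_true, Nat.not_even_two_mul_add_one, if_false]
    simp only [map_add, map_mul, Nat.cast_mul, Nat.cast_add, map_natCast, Nat.cast_one,
      Nat.cast_ofNat, map_ofNat, map_one]
    ring

lemma prod_pivots (n : ℕ) :
    ∏ k ∈ Finset.range n, (if Even k then (k : Polynomial ℚ) + 1 else X + (k : Polynomial ℚ) + 1)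
      = C ((2 * ((n + 1) / 2) - 1).doubleFactorial : ℚ) *
        ∏ i ∈ Finset.range (n / 2), (X + C (2 * (i : ℚ) + 2)) := by
  rcases Nat.even_or_odd' n with ⟨m, rfl | rfl⟩
  · rw [prod_pivots_two_mul, show (2 * m + 1) / 2 = m by omega, show 2 * m / 2 = m by omega]
  · rw [Finset.prod_range_succ, prod_pivots_two_mul, show (2 * m + 1 + 1) / 2 = m + 1 by omega,
      show (2 * m + 1) / 2 = m by omega, doubleFactorial_two_mul_succ_sub_one]
    simp only [even_two_mul, if_true]
    simp only [map_mul, Nat.cast_mul, Nat.cast_add, map_natCast, Nat.cast_one, map_add, map_one,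
      Nat.cast_ofNat, map_ofNat]
    ring

lemma aF_neg_one (F : Type*) [Field F] (m : ℤ) : aF F (-1) m = m := by
  unfold aF
  split_ifs with h
  · obtain ⟨k, rfl⟩ := Int.eq_ofNat_of_zero_le h.le
    simp
  · obtain ⟨k, hk⟩ := Int.eq_ofNat_of_zero_le (neg_nonneg.2 (not_lt.1 h))
    obtain rfl : m = -k := by omega
    simp

/-- in ℚ[x],
d_{n,1}(x,-1) = det( binom(x+i+j-2, j-1)·(j-i+1) )
             = (2⌊(n+1)/2⌋-1)‼ · ∏_{i=1}^{⌊n/2⌋}(x+2i). -/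
theorem statement10 (n : ℕ) (hn : 1 ≤ n) :
    dF ℚ n 1 (-1) =
      Matrix.det (Matrix.of fun i j : Fin n =>
        binomP ℚ (Polynomial.X + ((i : ℕ) : Polynomial ℚ) + ((j : ℕ) : Polynomial ℚ)) (j : ℕ) *
          Polynomial.C (((j : ℕ) : ℚ) - ((i : ℕ) : ℚ) + 1)) ∧
    dF ℚ n 1 (-1) =
      Polynomial.C ((Nat.doubleFactorial (2 * ((n + 1) / 2) - 1) : ℚ)) *
        ∏ i ∈ Finset.range (n / 2), (Polynomial.X + Polynomial.C (2 * (i : ℚ) + 2)) := by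
  have hdF : dF ℚ n 1 (-1) =
      Matrix.det (Matrix.of fun i j : Fin n =>
        binomP ℚ (X + ((i : ℕ) : Polynomial ℚ) + ((j : ℕ) : Polynomial ℚ)) (j : ℕ) *
          C (((j : ℕ) : ℚ) - ((i : ℕ) : ℚ) + 1)) := by
    simp [dF, aF_neg_one]
  refine ⟨hdF, ?_⟩
  rw [hdF, matrix_eq_lower_mul_upper, Matrix.det_mul, Matrix.det_of_isLowerTriangular,
    Matrix.det_of_isUpperTriangular, ← Finset.prod_mul_distrib]
  · simp only [Matrix.of_apply, lowerEntry_mul_upperEntry_self]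
    rw [Fin.prod_univ_eq_prod_range
      (fun k => if Even k then (k : Polynomial ℚ) + 1 else X + (k : Polynomial ℚ) + 1), prod_pivots]
  · intro k j h
    exact upperEntry_of_lt h
  · intro i k h
    exact lowerEntry_of_lt h

end
end
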